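/- arXiv:1109.5199 — 2 statements merged into one kernel-verified Lean document; each statement's English description precedes it below -/
import Mathlib

section
/- Suppose 1/s₁ + 1/s₂ > 1. Then as a → 0⁺ the absolutely continuous invariant probability measures μ_a of W_a converge *-weakly to the Dirac measure δ_{1/2} at the point 1/2; that is, for every continuous function g : [0,1] → ℝ, ∫ g dμ_a → g(1/2) as a → 0⁺. -/
open MeasureTheory Filter Topology

/-- The W-like map `W_a` with parameters `s₁ s₂ p q r` and perturbation `a`. -/
noncomputable def Wmap (s₁ s₂ p q r a : ℝ) (x : ℝ) : ℝ :=
  if x < 1/2 - (1/2 + r*a)/(s₁ + p*a) then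
    1 - (2*(s₁ + p*a)/(s₁ - 1 + p*a - 2*r*a)) * x
  else if x < 1/2 then
    (s₁ + p*a)*(x - 1/2) + 1/2 + r*a
  else if x < 1/2 + (1/2 + r*a)/(s₂ + q*a) then
    -(s₂ + q*a)*(x - 1/2) + 1/2 + r*a
  else
    1 + (2*(s₂ + q*a)/(s₂ - 1 + q*a - 2*r*a)) * (x - 1)

noncomputable def VV (S₁ S₂ e x : ℝ) : ℝ :=
  if x < 1/2 - (1/2 + e)/S₁ then 1 - (2*S₁/(S₁ - 1 - 2*e)) * x
  else if x < 1/2 then S₁*(x - 1/2) + 1/2 + e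
  else if x < 1/2 + (1/2 + e)/S₂ then -S₂*(x - 1/2) + 1/2 + e
  else 1 + (2*S₂/(S₂ - 1 - 2*e)) * (x - 1)

lemma VV_eq (s₁ s₂ p q r a : ℝ) :
    Wmap s₁ s₂ p q r a = VV (s₁ + p*a) (s₂ + q*a) (r*a) := by
  funext x
  unfold Wmap VV
  rw [show s₁ - 1 + p*a - 2*r*a = s₁ + p*a - 1 - 2*(r*a) by ring,
    show s₂ - 1 + q*a - 2*r*a = s₂ + q*a - 1 - 2*(r*a) by ring]

lemma VV_meas (S₁ S₂ e : ℝ) : Measurable (VV S₁ S₂ e) := by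
  unfold VV
  refine Measurable.ite measurableSet_Iio (by fun_prop) ?_
  refine Measurable.ite measurableSet_Iio (by fun_prop) ?_
  exact Measurable.ite measurableSet_Iio (by fun_prop) (by fun_prop)

lemma vol_affine (m b : ℝ) (hm : m ≠ 0) (A : Set ℝ) :
    volume.real {x | m * x + b ∈ A} = |m⁻¹| * volume.real A := by
  have h1 : {x | m * x + b ∈ A} = (m * ·) ⁻¹' ((· + b) ⁻¹' A) := rfl
  rw [h1, Measure.real, Real.volume_preimage_mul_left hm, measure_preimage_add_right,
    ENNReal.toReal_mul, ENNReal.toReal_ofReal (abs_nonneg _)]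
  rfl

lemma vol_sub_affine (m b c : ℝ) (hm : m ≠ 0) (hc : |m⁻¹| = c) (A B : Set ℝ)
    (hA : volume A ≠ ⊤) (h : ∀ x ∈ B, m * x + b ∈ A) :
    volume.real B ≤ c * volume.real A := by
  rw [← hc, ← vol_affine m b hm]
  refine measureReal_mono h ?_
  have h1 : {x | m * x + b ∈ A} = (m * ·) ⁻¹' ((· + b) ⁻¹' A) := rfl
  rw [h1, Real.volume_preimage_mul_left hm, measure_preimage_add_right]
  exact ENNReal.mul_ne_top ENNReal.ofReal_ne_top hA

lemma core (S₁ S₂ e : ℝ) (h1 : 1 < S₁) (h2 : 1 < S₂) (he : 0 < e)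
    (he1 : 2*e < S₁ - 1) (he2 : 2*e < S₂ - 1) (u v : ℝ)
    (hu : u = 1/2 - e/(S₁-1)) (hv : v = 1/2 + e*S₁/((S₁-1)*S₂))
    (S : Set ℝ) (hS01 : S ⊆ Set.Icc 0 1) (hSK : ∀ x ∈ S, x ≤ u ∨ v ≤ x)
    (hT : ∀ x ∈ S, VV S₁ S₂ e x ∈ S) : volume S = 0 := by
  have hfin : ∀ B ⊆ S, volume B ≠ ⊤ := fun B hB =>
    ((measure_mono (hB.trans hS01)).trans_lt (by simp)).ne
  set L := S ∩ Set.Iic u with hL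
  set R := S ∩ Set.Ici v with hR
  have hLS : L ⊆ S := Set.inter_subset_left
  have hRS : R ⊆ S := Set.inter_subset_left
  have d1 : 0 < S₁ - 1 := by linarith
  have d2 : 0 < S₂ - 1 := by linarith
  have p1 : 0 < S₁ := by linarith
  have p2 : 0 < S₂ := by linarith
  have q1 : 0 < S₁ - 1 - 2*e := by linarith
  have q2 : 0 < S₂ - 1 - 2*e := by linarith
  have hu2 : u < 1/2 := by rw [hu]; have := div_pos he d1; linarith
  have hv2 : 1/2 < v := by rw [hv]; have : 0 < e*S₁/((S₁-1)*S₂) := by positivity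
                           linarith
  have hS : volume.real S ≤ volume.real L + volume.real R := by
    refine (measureReal_mono (s₂ := L ∪ R) ?_ ?_).trans (measureReal_union_le _ _)
    · intro x hx
      rcases hSK x hx with h | h
      · exact Or.inl ⟨hx, h⟩
      · exact Or.inr ⟨hx, h⟩
    · exact hfin _ (Set.union_subset hLS hRS)
  set c := 1/2 - (1/2 + e)/S₁ with hc
  set d := 1/2 + (1/2 + e)/S₂ with hd
  have hc' : (S₁ - 1 - 2*e)/(2*S₁) = c := by rw [hc]; field_simp; ring
  have hd' : (S₂ - 1 - 2*e)/(2*S₂) = 1 - d := by rw [hd]; field_simp; ring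
  -- left
  have A1 : volume.real (L ∩ Set.Iio c) ≤ c * volume.real S := by
    refine vol_sub_affine (-(2*S₁/(S₁ - 1 - 2*e))) 1 c (neg_ne_zero.2 (by positivity)) ?_ _ _
      (hfin _ subset_rfl) ?_
    · rw [inv_neg, abs_neg, abs_of_pos (by positivity), inv_div, hc']
    · rintro x ⟨hx, hxc⟩
      have := hT x (hLS hx)
      unfold VV at this
      rw [if_pos (show x < _ from hxc)] at this
      convert this using 1; ring
  have A2 : volume.real (L ∩ Set.Ici c) ≤ S₁⁻¹ * volume.real L := by
    refine vol_sub_affine S₁ (-S₁/2 + 1/2 + e) _ (by positivity) (abs_of_pos (by positivity)) _ _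
      (hfin _ hLS) ?_
    rintro x ⟨hx, hxc⟩
    have h := hT x (hLS hx)
    have hxu : x ≤ u := hx.2
    unfold VV at h
    rw [if_neg (not_lt.2 hxc), if_pos (by linarith)] at h
    have e1 : S₁ * (x - 1/2) + 1/2 + e = S₁ * x + (-S₁/2 + 1/2 + e) := by ring
    rw [e1] at h
    refine ⟨h, ?_⟩
    have e2 : S₁ * u + (-S₁/2 + 1/2 + e) = u := by rw [hu]; field_simp; ring
    have := mul_le_mul_of_nonneg_left hxu p1.le
    show _ ≤ u
    linarith
  have A3 : volume.real (R ∩ Set.Iio d) ≤ S₂⁻¹ * volume.real L := by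
    refine vol_sub_affine (-S₂) (S₂/2 + 1/2 + e) _ (neg_ne_zero.2 (by positivity)) ?_ _ _
      (hfin _ hLS) ?_
    · rw [inv_neg, abs_neg, abs_of_pos (by positivity)]
    rintro x ⟨hx, hxd⟩
    have h := hT x (hRS hx)
    have hxv : v ≤ x := hx.2
    have hcl : c < 1/2 := by rw [hc]; have : 0 < (1/2+e)/S₁ := by positivity
                             linarith
    unfold VV at h
    rw [if_neg (by rw [← hc]; linarith), if_neg (by linarith), if_pos (show x < _ from hxd)] at h
    have e1 : -S₂ * (x - 1/2) + 1/2 + e = -S₂ * x + (S₂/2 + 1/2 + e) := by ring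
    rw [e1] at h
    refine ⟨h, ?_⟩
    have e2 : -S₂ * v + (S₂/2 + 1/2 + e) = u := by rw [hu, hv]; field_simp; ring
    have := mul_le_mul_of_nonneg_left hxv p2.le
    show _ ≤ u
    linarith
  have A4 : volume.real (R ∩ Set.Ici d) ≤ (1-d) * volume.real S := by
    refine vol_sub_affine (2*S₂/(S₂ - 1 - 2*e)) (1 - 2*S₂/(S₂ - 1 - 2*e)) _ (by positivity) ?_ _ _
      (hfin _ subset_rfl) ?_
    · rw [abs_of_pos (by positivity), inv_div, hd']
    rintro x ⟨hx, hxd⟩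
    have h := hT x (hRS hx)
    have hxv : v ≤ x := hx.2
    have hcl : c < 1/2 := by rw [hc]; have : 0 < (1/2+e)/S₁ := by positivity
                             linarith
    unfold VV at h
    rw [if_neg (by rw [← hc]; linarith), if_neg (by linarith), if_neg (not_lt.2 hxd)] at h
    convert h using 1; ring
  have B1 : volume.real L ≤ c * volume.real S + S₁⁻¹ * volume.real L := by
    refine le_trans ?_ (add_le_add A1 A2)
    refine (measureReal_mono ?_ ?_).trans (measureReal_union_le _ _)
    · intro x hx
      rcases lt_or_ge x c with h | h
      · exact Or.inl ⟨hx, h⟩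
      · exact Or.inr ⟨hx, h⟩
    · exact hfin _ (Set.union_subset (Set.inter_subset_left.trans hLS)
        (Set.inter_subset_left.trans hLS))
  have B2 : volume.real R ≤ S₂⁻¹ * volume.real L + (1-d) * volume.real S := by
    refine le_trans ?_ (add_le_add A3 A4)
    refine (measureReal_mono ?_ ?_).trans (measureReal_union_le _ _)
    · intro x hx
      rcases lt_or_ge x d with h | h
      · exact Or.inl ⟨hx, h⟩
      · exact Or.inr ⟨hx, h⟩
    · exact hfin _ (Set.union_subset (Set.inter_subset_left.trans hRS)
        (Set.inter_subset_left.trans hRS))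
  have hz : volume.real S = 0 := by
    have hs0 : 0 ≤ volume.real S := measureReal_nonneg
    have e1 : c = u * (1 - S₁⁻¹) := by rw [hc, hu]; field_simp; ring
    have e2 : S₂⁻¹ * u + (1 - d) = 1 - v := by rw [hd, hu, hv]; field_simp; ring
    have hlt : 0 < 1 - S₁⁻¹ := by
      have := inv_lt_one_of_one_lt₀ h1; linarith
    have C1 : volume.real L ≤ u * volume.real S := by
      rw [e1] at B1
      have : (1 - S₁⁻¹) * volume.real L ≤ (1 - S₁⁻¹) * (u * volume.real S) := by linarith
      exact le_of_mul_le_mul_left this hlt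
    have C2 : volume.real R ≤ (1 - v) * volume.real S := by
      have := mul_le_mul_of_nonneg_left C1 (inv_pos.2 p2).le
      rw [← e2]; linarith
    nlinarith
  exact (measureReal_eq_zero_iff (hfin _ subset_rfl)).1 hz

lemma core2 (S₁ S₂ e : ℝ) (h1 : 1 < S₁) (h2 : 1 < S₂) (he : 0 < e)
    (he1 : 2*e < S₁ - 1) (he2 : 2*e < S₂ - 1) (hss : S₁ * S₂ < S₁ + S₂) (u v : ℝ)
    (hu : u = 1/2 - e/(S₁-1)) (hv : v = 1/2 + e*S₁/((S₁-1)*S₂))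
    (μ : Measure ℝ) [IsProbabilityMeasure μ]
    (hm : Set.MapsTo (VV S₁ S₂ e) (Set.Icc 0 1) (Set.Icc 0 1))
    (hac : μ ≪ volume) (h01 : μ (Set.Icc (0:ℝ) 1)ᶜ = 0)
    (hinv : ∀ A : Set ℝ, MeasurableSet A → μ (VV S₁ S₂ e ⁻¹' A) = μ A) :
    ∀ᵐ x ∂μ, x ∈ Set.Ioo u v := by
  have d1 : 0 < S₁ - 1 := by linarith
  have p1 : 0 < S₁ := by linarith
  have p2 : 0 < S₂ := by linarith
  set K := Set.Ioo u v with hK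
  set T := VV S₁ S₂ e with hTdef
  have hTm : Measurable T := VV_meas _ _ _
  -- forward invariance
  have hKT : ∀ x ∈ K, T x ∈ K := by
    rintro x ⟨hxu, hxv⟩
    have eu : S₁ * (u - 1/2) + 1/2 + e = u := by rw [hu]; field_simp; ring
    have ev : -S₂ * (v - 1/2) + 1/2 + e = u := by rw [hu, hv]; field_simp; ring
    have hev : 1/2 + e < v := by
      rw [hv]
      have : e < e*S₁/((S₁-1)*S₂) := by
        rw [lt_div_iff₀ (by nlinarith)]
        nlinarith
      linarith
    have huc : 1/2 - (1/2 + e)/S₁ ≤ u := by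
      have : e/(S₁-1) ≤ (1/2+e)/S₁ := by
        rw [div_le_div_iff₀ d1 p1]; nlinarith
      rw [hu]; linarith
    have hvd : v ≤ 1/2 + (1/2 + e)/S₂ := by
      have : e*S₁/((S₁-1)*S₂) ≤ (1/2+e)/S₂ := by
        rw [div_le_div_iff₀ (by positivity) p2]
        have : e * S₁ ≤ (1/2+e)*(S₁-1) := by nlinarith
        nlinarith
      rw [hv]; linarith
    rw [hTdef]
    unfold VV
    rw [if_neg (by linarith)]
    split_ifs with ha hb
    · constructor <;> nlinarith
    · have := not_lt.1 ha
      constructor <;> nlinarith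
    · linarith
  have hmono : Monotone (fun n : ℕ => T^[n] ⁻¹' K) := by
    refine monotone_nat_of_le_succ fun n x hx => ?_
    show T^[n+1] x ∈ K
    rw [Function.iterate_succ_apply']
    exact hKT _ hx
  have hKm : MeasurableSet K := measurableSet_Ioo
  have hmeas : ∀ n : ℕ, MeasurableSet (T^[n] ⁻¹' K) := fun n => (hTm.iterate n) hKm
  have hn : ∀ n : ℕ, μ (T^[n] ⁻¹' K) = μ K := by
    intro n
    induction n with
    | zero => simp
    | succ n ih => rw [← ih, ← hinv _ (hmeas n), ← Set.preimage_comp, Function.iterate_succ]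
  have hUn : μ (⋃ n : ℕ, T^[n] ⁻¹' K) = μ K := by
    rw [hmono.measure_iUnion]; simp [hn]
  have hnull : volume {x | x ∈ Set.Icc (0:ℝ) 1 ∧ ∀ n : ℕ, T^[n] x ∉ K} = 0 := by
    refine core S₁ S₂ e h1 h2 he he1 he2 u v hu hv _ (fun x hx => hx.1) ?_ ?_
    · rintro x ⟨-, hx⟩
      have := hx 0
      by_contra! hcon
      exact this ⟨hcon.1, hcon.2⟩
    · rintro x ⟨hx1, hx⟩
      exact ⟨hm hx1, fun n => hx (n+1)⟩
  have hfull : μ (⋃ n : ℕ, T^[n] ⁻¹' K) = 1 := by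
    rw [← prob_compl_eq_zero_iff (MeasurableSet.iUnion hmeas)]
    refine measure_mono_null ?_ (measure_union_null h01 (hac hnull))
    intro x hx
    by_cases hx1 : x ∈ Set.Icc (0:ℝ) 1
    · right
      refine ⟨hx1, fun n hn => hx (Set.mem_iUnion.2 ⟨n, hn⟩)⟩
    · exact Or.inl hx1
  rw [hUn] at hfull
  exact (prob_compl_eq_zero_iff hKm).2 hfull

/-- Theorem 1(I): if `1/s₁ + 1/s₂ > 1`, the acim's `μ_a` of `W_a` converge *-weakly to the
Dirac measure at `1/2` as `a → 0⁺`. -/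
theorem Wmap_acim_tendsto_dirac
    (s₁ s₂ p q r : ℝ) (hs₁ : 1 < s₁) (hs₂ : 1 < s₂)
    (hp : 0 < p) (hq : 0 < q) (hr : 0 < r)
    (hsum : 1 < 1/s₁ + 1/s₂)
    (a₁ : ℝ) (ha₁ : 0 < a₁) (μ : ℝ → Measure ℝ)
    (hμ : ∀ a, 0 < a → a < a₁ →
      Set.MapsTo (Wmap s₁ s₂ p q r a) (Set.Icc 0 1) (Set.Icc 0 1) ∧
      IsProbabilityMeasure (μ a) ∧
      μ a ≪ volume ∧
      μ a (Set.Icc (0:ℝ) 1)ᶜ = 0 ∧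
      (∀ A : Set ℝ, MeasurableSet A → μ a (Wmap s₁ s₂ p q r a ⁻¹' A) = μ a A)) :
    ∀ g : ℝ → ℝ, Continuous g →
      Tendsto (fun a => ∫ x, g x ∂(μ a)) (𝓝[>] (0:ℝ)) (𝓝 (g (1/2))) := by
  intro g hg
  have hss : s₁ * s₂ < s₁ + s₂ := by
    have : 1/s₁ + 1/s₂ = (s₁ + s₂)/(s₁*s₂) := by field_simp; ring
    rw [this, lt_div_iff₀ (by positivity)] at hsum
    linarith
  rw [Metric.tendsto_nhds]
  intro ε hε
  obtain ⟨δ, hδ, hgδ⟩ := Metric.continuous_iff.1 hg (1/2) (ε/2) (by positivity)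
  have ev {f h : ℝ → ℝ} (hf : Continuous f) (hh : Continuous h) (h0 : f 0 < h 0) :
      ∀ᶠ a in 𝓝[>] (0:ℝ), f a < h a :=
    (hf.continuousAt.eventually_lt hh.continuousAt h0).filter_mono nhdsWithin_le_nhds
  have E1 := ev (f := fun a => 2*(r*a)) (h := fun a => s₁ + p*a - 1) (by fun_prop) (by fun_prop)
    (by simpa using hs₁)
  have E2 := ev (f := fun a => 2*(r*a)) (h := fun a => s₂ + q*a - 1) (by fun_prop) (by fun_prop)
    (by simpa using hs₂)
  have E3 := ev (f := fun a => (s₁ + p*a)*(s₂+q*a)) (h := fun a => (s₁ + p*a)+(s₂+q*a))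
    (by fun_prop) (by fun_prop) (by simpa using hss)
  have E4 := ev (f := fun a => r*a) (h := fun a => δ * (s₁+p*a-1))
    (by fun_prop) (by fun_prop) (by simp; nlinarith)
  have E5 := ev (f := fun a => r*a*(s₁+p*a)) (h := fun a => δ * ((s₁+p*a-1)*(s₂+q*a)))
    (by fun_prop) (by fun_prop) (by
      simp only [mul_zero, zero_mul, add_zero]
      exact mul_pos hδ (mul_pos (by linarith) (by linarith)))
  have E6 := ev (f := fun a => a) (h := fun _ => a₁) (by fun_prop) (by fun_prop) ha₁
  filter_upwards [E1, E2, E3, E4, E5, E6, self_mem_nhdsWithin] with a F1 F2 F3 F4 F5 F6 F7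
  have ha : 0 < a := F7
  obtain ⟨hm, hprob, hac, h01, hinv⟩ := hμ a ha F6
  rw [VV_eq] at hm
  simp only [VV_eq] at hinv
  have hpa : 0 < p*a := by positivity
  have hqa : 0 < q*a := by positivity
  have hae := core2 (s₁+p*a) (s₂+q*a) (r*a) (by linarith) (by linarith) (by positivity)
    F1 F2 F3 _ _ rfl rfl (μ a) hm hac h01 hinv
  have dd : 0 < s₁ + p*a - 1 := by linarith
  have b1 : r*a/(s₁+p*a-1) < δ := by rw [div_lt_iff₀ dd]; exact F4
  have b2 : r*a*(s₁+p*a)/((s₁+p*a-1)*(s₂+q*a)) < δ := by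
    rw [div_lt_iff₀ (mul_pos dd (by linarith))]; exact F5
  have hb : ∀ᵐ x ∂(μ a), ‖g x - g (1/2)‖ ≤ ε/2 := by
    filter_upwards [hae] with x hx
    have := hgδ x (by rw [Real.dist_eq, abs_lt]; constructor <;> linarith [hx.1, hx.2])
    rw [Real.dist_eq] at this
    exact this.le
  have hi : Integrable (fun x => g x - g (1/2)) (μ a) :=
    Integrable.of_bound (by fun_prop) _ hb
  have hgi : Integrable g (μ a) := by
    have := hi.add (integrable_const (g (1/2)))
    refine this.congr (Eventually.of_forall fun x => ?_)
    simp
  have := norm_integral_le_of_norm_le_const hb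
  rw [integral_sub hgi (integrable_const _)] at this
  simp at this
  rw [Real.dist_eq]
  simp only [one_div] at *
  linarith
end

section
/- Suppose 1/s₁ + 1/s₂ = 1. Then as a → 0⁺ the measures μ_a converge *-weakly to the measure ((qs₁+ps₂−p−q)(s₂+2) / [(qs₁+ps₂−p−q)(s₂+2) + 2rs₁s₂²])·μ_0 + (2rs₁s₂² / [(qs₁+ps₂−p−q)(s₂+2) + 2rs₁s₂²])·δ_{1/2}, where δ_{1/2} is the Dirac measure at 1/2; that is, for every continuous g : [0,1] → ℝ, ∫ g dμ_a converges to the corresponding convex combination of ∫ g dμ_0 and g(1/2). -/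
open MeasureTheory Filter Topology

/-- The invariant density of the unperturbed Markov map `W₀`. -/
noncomputable def h0 (s₁ s₂ : ℝ) (x : ℝ) : ℝ :=
  if x < 1/2 then 2*s₁*(s₂+1)/(2*s₁*s₂+s₁-s₂) else 2*s₂*(s₁-1)/(2*s₁*s₂+s₁-s₂)


noncomputable def Wm (x1 x2 S T c : ℝ) (x : ℝ) : ℝ :=
  if x < x1 then 1 - x1⁻¹ * x
  else if x < 1/2 then S * x + (c - S/2)
  else if x < x2 then (c + T/2) - T * x
  else (1-x2)⁻¹ * x + (1 - (1-x2)⁻¹)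

lemma bdd_ii {G : ℝ → ℝ} (hG : Measurable G) {C : ℝ} (hC : ∀ x, |G x| ≤ C) (a b : ℝ) :
    IntervalIntegrable G volume a b := by
  rw [intervalIntegrable_iff]
  exact Measure.integrableOn_of_bounded (M := C) (by simp [Set.uIoc]) hG.aestronglyMeasurable
    (ae_of_all _ fun x => by simpa using hC x)

lemma Wm_meas (x1 x2 S T c : ℝ) : Measurable (Wm x1 x2 S T c) := by
  unfold Wm
  refine Measurable.ite measurableSet_Iio (by fun_prop) ?_
  refine Measurable.ite measurableSet_Iio (by fun_prop) ?_
  exact Measurable.ite measurableSet_Iio (by fun_prop) (by fun_prop)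

lemma transfer {x1 x2 S T c : ℝ} (h0 : 0 < x1) (h1 : x1 < 1/2) (h2 : 1/2 < x2) (h3 : x2 < 1)
    (hS : 0 < S) (hT : 0 < T) (e1 : S * x1 + (c - S/2) = 0) (e2 : (c + T/2) - T * x2 = 0)
    {G : ℝ → ℝ} (hG : Measurable G) {C : ℝ} (hC : ∀ x, |G x| ≤ C) :
    (∀ t, 0 ≤ t → t ≤ x1 → ∫ x in (0:ℝ)..t, G (Wm x1 x2 S T c x) =
      x1 * ((∫ x in (0:ℝ)..1, G x) - ∫ x in (0:ℝ)..(1 - x1⁻¹ * t), G x)) ∧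
    (∀ t, x1 ≤ t → t ≤ 1/2 → ∫ x in (0:ℝ)..t, G (Wm x1 x2 S T c x) =
      x1 * (∫ x in (0:ℝ)..1, G x) + S⁻¹ * ∫ x in (0:ℝ)..(S * t + (c - S/2)), G x) ∧
    (∀ t, 1/2 ≤ t → t ≤ x2 → ∫ x in (0:ℝ)..t, G (Wm x1 x2 S T c x) =
      x1 * (∫ x in (0:ℝ)..1, G x) + S⁻¹ * (∫ x in (0:ℝ)..c, G x) +
       T⁻¹ * ((∫ x in (0:ℝ)..c, G x) - ∫ x in (0:ℝ)..((c + T/2) - T * t), G x)) ∧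
    (∀ t, x2 ≤ t → t ≤ 1 → ∫ x in (0:ℝ)..t, G (Wm x1 x2 S T c x) =
      x1 * (∫ x in (0:ℝ)..1, G x) + S⁻¹ * (∫ x in (0:ℝ)..c, G x) +
       T⁻¹ * (∫ x in (0:ℝ)..c, G x) +
       (1-x2) * ∫ x in (0:ℝ)..((1-x2)⁻¹ * t + (1 - (1-x2)⁻¹)), G x) := by
  have ii := bdd_ii hG hC
  have ii' := bdd_ii (hG.comp (Wm_meas x1 x2 S T c)) (C := C) (fun x => hC _)
  simp only [Function.comp_def] at ii'
  have h4 : (1 - x2) ≠ 0 := by linarith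
  have sub : ∀ a b : ℝ, ∫ x in a..b, G x = (∫ x in (0:ℝ)..b, G x) - ∫ x in (0:ℝ)..a, G x := by
    intro a b
    rw [intervalIntegral.integral_interval_sub_left (ii _ _) (ii _ _)]
  have A1 : ∀ t, 0 ≤ t → t ≤ x1 → ∫ x in (0:ℝ)..t, G (Wm x1 x2 S T c x) =
      x1 * ((∫ x in (0:ℝ)..1, G x) - ∫ x in (0:ℝ)..(1 - x1⁻¹ * t), G x) := by
    intro t ht ht'
    rw [intervalIntegral.integral_congr_Ioo_of_le (g := fun x => G (1 - x1⁻¹ * x)) ht,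
      intervalIntegral.integral_comp_sub_mul G (by positivity), sub]
    · simp
    · intro x hx
      simp only [Wm, if_pos (lt_of_lt_of_le hx.2 ht')]
  have A2 : ∀ t, x1 ≤ t → t ≤ 1/2 → ∫ x in x1..t, G (Wm x1 x2 S T c x) =
      S⁻¹ * ∫ x in (0:ℝ)..(S * t + (c - S/2)), G x := by
    intro t ht ht'
    rw [intervalIntegral.integral_congr_Ioo_of_le (g := fun x => G (S * x + (c - S/2))) ht,
      intervalIntegral.integral_comp_mul_add G (by positivity), e1]
    · simp
    · intro x hx
      simp only [Wm, if_neg (not_lt.2 hx.1.le), if_pos (lt_of_lt_of_le hx.2 ht')]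
  have A3 : ∀ t, 1/2 ≤ t → t ≤ x2 → ∫ x in (1/2)..t, G (Wm x1 x2 S T c x) =
      T⁻¹ * ((∫ x in (0:ℝ)..c, G x) - ∫ x in (0:ℝ)..((c + T/2) - T * t), G x) := by
    intro t ht ht'
    rw [intervalIntegral.integral_congr_Ioo_of_le (g := fun x => G ((c + T/2) - T * x)) ht,
      intervalIntegral.integral_comp_sub_mul G (by positivity), sub]
    · rw [show c + T/2 - T * (1/2) = c by ring]; simp
    · intro x hx
      simp only [Wm, if_neg (not_lt.2 (h1.le.trans hx.1.le)), if_neg (not_lt.2 hx.1.le),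
        if_pos (lt_of_lt_of_le hx.2 ht')]
  have A4 : ∀ t, x2 ≤ t → t ≤ 1 → ∫ x in x2..t, G (Wm x1 x2 S T c x) =
       (1-x2) * ∫ x in (0:ℝ)..((1-x2)⁻¹ * t + (1 - (1-x2)⁻¹)), G x := by
    intro t ht ht'
    rw [intervalIntegral.integral_congr_Ioo_of_le
      (g := fun x => G ((1-x2)⁻¹ * x + (1 - (1-x2)⁻¹))) ht,
      intervalIntegral.integral_comp_mul_add G (inv_ne_zero h4)]
    · rw [show (1-x2)⁻¹ * x2 + (1 - (1-x2)⁻¹) = 0 by field_simp; ring]; simp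
    · intro x hx
      have : x2 < x := hx.1
      simp only [Wm, if_neg (not_lt.2 (show x1 ≤ x by linarith)),
        if_neg (not_lt.2 (show 1/2 ≤ x by linarith)), if_neg (not_lt.2 this.le)]
  have B1 := A1 x1 h0.le le_rfl
  rw [inv_mul_cancel₀ h0.ne'] at B1
  simp only [sub_self, intervalIntegral.integral_same, sub_zero] at B1
  have B2 := A2 (1/2) h1.le le_rfl
  rw [show S * (1/2) + (c - S/2) = c by ring] at B2
  have B3 := A3 x2 h2.le le_rfl
  rw [e2] at B3
  simp only [intervalIntegral.integral_same, sub_zero] at B3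
  refine ⟨A1, ?_, ?_, ?_⟩
  · intro t ht ht'
    rw [← intervalIntegral.integral_add_adjacent_intervals (ii' 0 x1) (ii' x1 t), B1, A2 t ht ht']
  · intro t ht ht'
    rw [← intervalIntegral.integral_add_adjacent_intervals (ii' 0 (1/2)) (ii' (1/2) t), 
     ← intervalIntegral.integral_add_adjacent_intervals (ii' 0 x1) (ii' x1 (1/2)), 
     B1, B2, A3 t ht ht']
  · intro t ht ht'
    rw [← intervalIntegral.integral_add_adjacent_intervals (ii' 0 x2) (ii' x2 t), 
     ← intervalIntegral.integral_add_adjacent_intervals (ii' 0 (1/2)) (ii' (1/2) x2), 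
     ← intervalIntegral.integral_add_adjacent_intervals (ii' 0 x1) (ii' x1 (1/2)), 
     B1, B2, B3, A4 t ht ht']

lemma weak_aux {ν : Measure ℝ} [IsProbabilityMeasure ν] (hac : ν ≪ volume)
    (hsupp : ν (Set.Icc (0:ℝ) 1)ᶜ = 0) {H : ℕ → ℝ → ℝ} (hm : ∀ n, Measurable (H n)) {C : ℝ}
    (hb : ∀ n x, |H n x| ≤ C)
    (ht : ∀ t, 0 ≤ t → t ≤ 1 → Tendsto (fun n => ∫ x in (0:ℝ)..t, H n x) atTop (𝓝 0)) :
    Tendsto (fun n => ∫ x, H n x ∂ν) atTop (𝓝 0) := by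
  set l : Measure ℝ := volume.restrict (Set.Icc (0:ℝ) 1) with hl
  have hC0 : 0 ≤ C := (abs_nonneg _).trans (hb 0 0)
  have hfin : IsFiniteMeasure l := by rw [hl]; infer_instance
  have hνl : ν ≪ l := by
    intro s hs
    rw [hl, Measure.restrict_apply' measurableSet_Icc] at hs
    have h1 := hac hs
    refine le_antisymm ?_ bot_le
    calc ν s ≤ ν ((s ∩ Set.Icc 0 1) ∪ (Set.Icc 0 1)ᶜ) := by
          apply measure_mono; intro x hx; by_cases h : x ∈ Set.Icc (0:ℝ) 1
          · exact Or.inl ⟨hx, h⟩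
          · exact Or.inr h
      _ ≤ _ := measure_union_le _ _
      _ = 0 := by rw [h1, hsupp, add_zero]
  have hint : ∀ n, Integrable (H n) l := fun n =>
    Integrable.of_bound (hm n).aestronglyMeasurable C (ae_of_all _ fun x => hb n x)
  have stepA : ∀ A : Set ℝ, MeasurableSet A →
      Tendsto (fun n => ∫ x in A, H n x ∂l) atTop (𝓝 0) := by
    have hIic : ∀ t, Tendsto (fun n => ∫ x in Set.Iic t, H n x ∂l) atTop (𝓝 0) := by
      intro t
      rcases lt_or_ge t 0 with h | h
      · have : ∀ n, ∫ x in Set.Iic t, H n x ∂l = 0 := by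
          intro n
          rw [hl, Measure.restrict_restrict measurableSet_Iic]
          have : Set.Iic t ∩ Set.Icc (0:ℝ) 1 = ∅ := by
            ext x; simp; intro h1 h2; linarith
          rw [this]; simp
        simp [this]
      · have : ∀ n, ∫ x in Set.Iic t, H n x ∂l = ∫ x in (0:ℝ)..(min t 1), H n x := by
          intro n
          rw [hl, Measure.restrict_restrict measurableSet_Iic]
          have : Set.Iic t ∩ Set.Icc (0:ℝ) 1 = Set.Icc 0 (min t 1) := by
            ext x; simp; tauto
          rw [this, integral_Icc_eq_integral_Ioc, intervalIntegral.integral_of_le (by positivity)]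
        simp only [this]
        exact ht _ (by positivity) (min_le_right _ _)
    have huniv : Tendsto (fun n => ∫ x, H n x ∂l) atTop (𝓝 0) := by
      have := ht 1 zero_le_one le_rfl
      refine this.congr fun n => ?_
      rw [hl, integral_Icc_eq_integral_Ioc, intervalIntegral.integral_of_le zero_le_one]
    intro A hA
    induction A, hA using MeasurableSpace.induction_on_inter
      (BorelSpace.measurable_eq.trans (borel_eq_generateFrom_Iic ℝ)) isPiSystem_Iic with
    | empty => simp
    | basic t ht => obtain ⟨t, rfl⟩ := ht; exact hIic t
    | compl t htm ih =>
      have := huniv.sub ih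
      rw [sub_zero] at this
      refine this.congr fun n => ?_
      rw [← integral_add_compl htm (hint n)]; ring
    | iUnion f hd hfm ih =>
      have h1 : ∀ n, ∫ x in ⋃ i, f i, H n x ∂l = ∑' i, ∫ x in f i, H n x ∂l := fun n =>
        integral_iUnion hfm hd (hint n).integrableOn
      simp only [h1]
      have := tendsto_tsum_of_dominated_convergence (𝓕 := atTop)
        (f := fun n i => ∫ x in f i, H n x ∂l) (g := fun _ => 0)
        (bound := fun i => C * l.real (f i)) ?_ ih ?_
      · simpa using this
      · apply Summable.mul_left
        apply ENNReal.summable_toReal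
        rw [← measure_iUnion hd hfm]
        exact measure_ne_top _ _
      · refine Eventually.of_forall fun n i => ?_
        exact norm_setIntegral_le_of_norm_le_const (measure_lt_top _ _) (fun x _ => hb n x)
  have bint : ∀ n {f : ℝ → ℝ}, Integrable f l → Integrable (fun x => f x * H n x) l := by
    intro n f hf
    exact hf.mul_bdd (hm n).aestronglyMeasurable (ae_of_all _ fun x => hb n x)
  have stepB : ∀ f : ℝ → ℝ, Integrable f l →
      Tendsto (fun n => ∫ x, f x * H n x ∂l) atTop (𝓝 0) := by
    intro f hf
    refine Integrable.induction (P := fun f : ℝ → ℝ =>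
      Tendsto (fun n => ∫ x, f x * H n x ∂l) atTop (𝓝 0)) ?_ ?_ ?_ ?_ hf
    · intro c s hs _
      have := (stepA s hs).const_mul c
      rw [mul_zero] at this
      refine this.congr fun n => ?_
      rw [← integral_const_mul, ← integral_indicator hs]
      congr 1; ext x
      by_cases h : x ∈ s <;> simp [h]
    · intro f g _ hf hg ihf ihg
      have := ihf.add ihg
      rw [add_zero] at this
      refine this.congr fun n => ?_
      rw [← integral_add (bint n hf) (bint n hg)]
      congr 1; ext x; simp; ring
    · rw [← isSeqClosed_iff_isClosed]
      intro u f hu huf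
      simp only [Set.mem_ofPred_eq] at hu ⊢
      rw [Metric.tendsto_atTop]
      intro ε hε
      have hC1 : 0 < C + 1 := by linarith
      obtain ⟨N, hN⟩ := (Metric.tendsto_atTop.1 huf) (ε / 2 / (C+1)) (by positivity)
      have hN' := hN N le_rfl
      obtain ⟨M, hM⟩ := (Metric.tendsto_atTop.1 (hu N)) (ε/2) (by positivity)
      refine ⟨M, fun n hn => ?_⟩
      have h1 := hM n hn
      rw [Real.dist_eq, sub_zero] at h1 ⊢
      have h2 : |∫ x, f x * H n x ∂l - ∫ x, u N x * H n x ∂l| ≤ C * dist (u N) f := by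
        rw [dist_comm, L1.dist_eq_integral_dist, 
          ← integral_sub (bint n (L1.integrable_coeFn _)) (bint n (L1.integrable_coeFn _)),
          ← integral_const_mul, ← Real.norm_eq_abs]
        refine norm_integral_le_of_norm_le ?_ (ae_of_all _ fun x => ?_)
        · apply Integrable.const_mul
          simp only [dist_eq_norm]
          exact ((L1.integrable_coeFn f).sub (L1.integrable_coeFn (u N))).norm
        · rw [← sub_mul, norm_mul, mul_comm, Real.dist_eq]
          exact mul_le_mul_of_nonneg_right (hb n x) (norm_nonneg _)
      have h3 : C * dist (u N) f ≤ ε/2 := by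
        rw [lt_div_iff₀ hC1] at hN'
        have := dist_nonneg (x := u N) (y := f)
        nlinarith
      have := abs_sub_abs_le_abs_sub (∫ x, f x * H n x ∂l) (∫ x, u N x * H n x ∂l)
      linarith
    · intro f g hfg _ ih
      refine ih.congr fun n => integral_congr_ae ?_
      filter_upwards [hfg] with x hx
      rw [hx]
  have := stepB (fun x => (ν.rnDeriv l x).toReal) Measure.integrable_toReal_rnDeriv
  refine this.congr fun n => ?_
  rw [← integral_rnDeriv_smul hνl]; rfl


lemma Deqs {x1 x2 S T c : ℝ} (h0 : 0 < x1) (h1 : x1 < 1/2) (h2 : 1/2 < x2) (h3 : x2 < 1)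
    (hS : 0 < S) (hT : 0 < T) (e1 : S * x1 + (c - S/2) = 0) (e2 : (c + T/2) - T * x2 = 0)
    {G g : ℝ → ℝ} (hG : Measurable G) (hg : Measurable g) {C Γ ρ : ℝ} (hC : ∀ x, |G x| ≤ C)
    (hΓ : ∀ x, |g x| ≤ Γ) (hGg : ∀ x, G x = g x + ρ * G (Wm x1 x2 S T c x))
    {D D0 : ℝ → ℝ} 
    (hD : ∀ t, D t = (∫ x in (0:ℝ)..t, G x) - t * ∫ x in (0:ℝ)..1, G x)
    (hD0 : ∀ t, D0 t = (∫ x in (0:ℝ)..t, g x) - t * ∫ x in (0:ℝ)..1, g x) :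
    ((1 - ρ) * (∫ x in (0:ℝ)..1, G x) = (∫ x in (0:ℝ)..1, g x) + ρ * (S⁻¹ + T⁻¹) * D c) ∧
    (∀ t, 0 ≤ t → t ≤ x1 →
      D t = D0 t + ρ * (-x1 * D (1 - x1⁻¹ * t) - t * (S⁻¹ + T⁻¹) * D c)) ∧
    (∀ t, x1 ≤ t → t ≤ 1/2 →
      D t = D0 t + ρ * (S⁻¹ * D (S * t + (c - S/2)) - t * (S⁻¹ + T⁻¹) * D c)) ∧
    (∀ t, 1/2 ≤ t → t ≤ x2 →
      D t = D0 t + ρ * (-T⁻¹ * D ((c + T/2) - T * t) + (1 - t) * (S⁻¹ + T⁻¹) * D c)) ∧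
    (∀ t, x2 ≤ t → t ≤ 1 →
      D t = D0 t + ρ * ((1-x2) * D ((1-x2)⁻¹ * t + (1 - (1-x2)⁻¹)) +
        (1 - t) * (S⁻¹ + T⁻¹) * D c)) := by
  obtain ⟨T1, T2, T3, T4⟩ := transfer h0 h1 h2 h3 hS hT e1 e2 hG hC
  have key : ∀ t, ∫ x in (0:ℝ)..t, G x = (∫ x in (0:ℝ)..t, g x) +
      ρ * ∫ x in (0:ℝ)..t, G (Wm x1 x2 S T c x) := by
    intro t
    have i2 : IntervalIntegrable (fun x => G (Wm x1 x2 S T c x)) volume 0 t :=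
      bdd_ii (hG.comp (Wm_meas x1 x2 S T c)) (C := C) (fun x => hC _) _ _
    rw [← intervalIntegral.integral_const_mul, ← intervalIntegral.integral_add (bdd_ii hg hΓ _ _)
      (i2.const_mul ρ)]
    congr 1; ext x; exact hGg x
  have h4 : (1 - x2) ≠ 0 := by linarith
  have rel : (S⁻¹ + T⁻¹) * c = x2 - x1 := by
    have a1 : S⁻¹ * c = 1/2 - x1 := by
      field_simp; linarith
    have a2 : T⁻¹ * c = x2 - 1/2 := by
      field_simp; linarith
    rw [add_mul, a1, a2]; ring
  have E1 : (1 - ρ) * (∫ x in (0:ℝ)..1, G x) =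
      (∫ x in (0:ℝ)..1, g x) + ρ * (S⁻¹ + T⁻¹) * D c := by
    have k1 := key 1
    rw [T4 1 h3.le le_rfl, show (1-x2)⁻¹ * 1 + (1 - (1-x2)⁻¹) = 1 by ring] at k1
    rw [hD c]
    linear_combination k1 + ρ * (∫ x in (0:ℝ)..1, G x) * rel
  refine ⟨E1, ?_, ?_, ?_, ?_⟩
  · intro t ht ht'
    have k := key t
    rw [T1 t ht ht'] at k
    have := mul_inv_cancel₀ h0.ne'
    rw [hD t, hD0 t, hD (1 - _)]
    linear_combination k - t * E1 + ρ * t * (∫ x in (0:ℝ)..1, G x) * this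
  · intro t ht ht'
    have k := key t
    rw [T2 t ht ht'] at k
    have := mul_inv_cancel₀ hS.ne'
    rw [hD t, hD0 t, hD (S * t + _)]
    linear_combination k - t * E1 + ρ * S⁻¹ * (∫ x in (0:ℝ)..1, G x) * e1 +
      ρ * (∫ x in (0:ℝ)..1, G x) * (t - x1) * this
  · intro t ht ht'
    have k := key t
    rw [T3 t ht ht'] at k
    have := mul_inv_cancel₀ hT.ne'
    rw [hD t, hD0 t, hD (c + T/2 - T * t)]
    have e3 := hD c
    linear_combination k - t * E1 - ρ * (S⁻¹ + T⁻¹) * e3 - ρ * T⁻¹ * (∫ x in (0:ℝ)..1, G x) * e2 +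
      ρ * (∫ x in (0:ℝ)..1, G x) * (t - x2) * this + ρ * (∫ x in (0:ℝ)..1, G x) * rel
  · intro t ht ht'
    have k := key t
    rw [T4 t ht ht'] at k
    have := mul_inv_cancel₀ h4
    rw [hD t, hD0 t, hD ((1-x2)⁻¹ * t + _)]
    have e3 := hD c
    linear_combination k - t * E1 - ρ * (S⁻¹ + T⁻¹) * e3 +
      ρ * (∫ x in (0:ℝ)..1, G x) * (t - 1) * this + ρ * (∫ x in (0:ℝ)..1, G x) * rel

lemma le_of_pow {x M K l : ℝ} (hl0 : 0 ≤ l) (hl : l < 1) (h : ∀ n : ℕ, x ≤ M + K * l ^ n) :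
    x ≤ M := by
  have := ((tendsto_pow_atTop_nhds_zero_of_lt_one hl0 hl).const_mul K).const_add M
  rw [mul_zero, add_zero] at this
  exact ge_of_tendsto' this h

lemma Dbound {x1 x2 S T c : ℝ} (h0 : 0 < x1) (h1 : x1 < 1/2) (h2 : 1/2 < x2) (h3 : x2 < 1)
    (hS : 0 < S) (hT : 0 < T) (e1 : S * x1 + (c - S/2) = 0) (e2 : (c + T/2) - T * x2 = 0)
    (hc2 : c ≤ x2) {ρ B : ℝ} (hρ0 : 0 ≤ ρ) (hρ : ρ ≤ 1) (hB0 : 0 ≤ B) (hB : B ≤ 1)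
    {D D0 : ℝ → ℝ} {Γ l K : ℝ} (hl : l < 1) (hlS : S⁻¹ ≤ l) (hlT : T⁻¹ ≤ l)
    (hl1 : x1 ≤ l) (hl2 : 1 - x2 ≤ l)
    (hD0 : ∀ t, 0 ≤ t → t ≤ 1 → |D0 t| ≤ 2 * Γ) (hDc : |D c| ≤ 8 * Γ)
    (hK : ∀ t, 0 ≤ t → t ≤ 1 → |D t| ≤ K)
    (E1 : ∀ t, 0 ≤ t → t ≤ x1 →
      D t = D0 t + ρ * (-x1 * D (1 - x1⁻¹ * t) - t * B * D c))
    (E2 : ∀ t, x1 ≤ t → t ≤ 1/2 →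
      D t = D0 t + ρ * (S⁻¹ * D (S * t + (c - S/2)) - t * B * D c))
    (E3 : ∀ t, 1/2 ≤ t → t ≤ x2 →
      D t = D0 t + ρ * (-T⁻¹ * D ((c + T/2) - T * t) + (1 - t) * B * D c))
    (E4 : ∀ t, x2 ≤ t → t ≤ 1 →
      D t = D0 t + ρ * ((1-x2) * D ((1-x2)⁻¹ * t + (1 - (1-x2)⁻¹)) + (1 - t) * B * D c)) :
    ∀ t, 0 ≤ t → t ≤ 1 → |D t| ≤ 10 * Γ / (1 - l) := by
  have hl0 : 0 < l := h0.trans_le hl1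
  have h4 : 0 < (1 - x2) := by linarith
  have step : ∀ t, 0 ≤ t → t ≤ 1 → ∃ t' k w, 0 ≤ t' ∧ t' ≤ 1 ∧ |k| ≤ l ∧ |w| ≤ 1 ∧
      D t = D0 t + ρ * (k * D t' + w * B * D c) := by
    intro t ht ht'
    rcases le_total t x1 with a | a
    · refine ⟨_, -x1, -t, ?_, ?_, ?_, ?_, (E1 t ht a).trans (by ring)⟩
      · have : x1⁻¹ * t ≤ 1 := by rw [inv_mul_le_iff₀ h0]; linarith
        linarith
      · have : 0 ≤ x1⁻¹ * t := by positivity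
        linarith
      · rw [abs_neg, abs_of_pos h0]; exact hl1
      · rw [abs_neg, abs_of_nonneg ht]; exact ht'
    rcases le_total t (1/2) with b | b
    · refine ⟨_, S⁻¹, -t, ?_, ?_, ?_, ?_, (E2 t a b).trans (by ring)⟩
      · nlinarith
      · nlinarith
      · rw [abs_of_pos (by positivity)]; exact hlS
      · rw [abs_neg, abs_of_nonneg ht]; exact ht'
    rcases le_total t x2 with d | d
    · refine ⟨_, -T⁻¹, 1 - t, ?_, ?_, ?_, ?_, (E3 t b d)⟩
      · nlinarith
      · nlinarith
      · rw [abs_neg, abs_of_pos (by positivity)]; exact hlT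
      · rw [abs_of_nonneg (by linarith)]; linarith
    · refine ⟨_, 1 - x2, 1 - t, ?_, ?_, ?_, ?_, (E4 t d ht')⟩
      · have : (1-x2)⁻¹ * t + (1 - (1-x2)⁻¹) = (1-x2)⁻¹ * (t - x2) := by field_simp; ring
        rw [this]
        have : 0 ≤ t - x2 := by linarith
        positivity
      · have : (1-x2)⁻¹ * t ≤ (1-x2)⁻¹ * 1 := by gcongr
        linarith
      · rw [abs_of_pos h4]; exact hl2
      · rw [abs_of_nonneg (by linarith)]; linarith
  set M := 10 * Γ / (1 - l) with hM
  have hM' : M * (1 - l) = 10 * Γ := by rw [hM]; field_simp [(sub_pos.2 hl).ne']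
  have hΓ0 : 0 ≤ Γ := by have := (abs_nonneg _).trans hDc; linarith
  have hM0 : 0 ≤ M := by have : 0 < 1 - l := by linarith
                         positivity
  have ind : ∀ n : ℕ, ∀ t, 0 ≤ t → t ≤ 1 → |D t| ≤ M + K * l ^ n := by
    intro n
    induction n with
    | zero => intro t ht ht'; have := hK t ht ht'; simp; linarith
    | succ n ih =>
      intro t ht ht'
      obtain ⟨t', k, w, a1, a2, a3, a4, a5⟩ := step t ht ht'
      have b1 := ih t' a1 a2
      have b2 : |k * D t'| ≤ l * (M + K * l ^ n) := by
        rw [abs_mul]; exact mul_le_mul a3 b1 (abs_nonneg _) hl0.le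
      have b3 : |w * B * D c| ≤ 8 * Γ := by
        rw [abs_mul, abs_mul, abs_of_nonneg hB0]
        calc |w| * B * |D c| ≤ 1 * 1 * (8 * Γ) := by gcongr
          _ = _ := by ring
      have b4 : |ρ * (k * D t' + w * B * D c)| ≤ l * (M + K * l ^ n) + 8 * Γ := by
        rw [abs_mul, abs_of_nonneg hρ0]
        have := abs_add_le (k * D t') (w * B * D c)
        have := abs_nonneg (k * D t' + w * B * D c)
        nlinarith
      rw [a5]
      have := abs_add_le (D0 t) (ρ * (k * D t' + w * B * D c))
      have := hD0 t ht ht'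
      rw [pow_succ]
      nlinarith
  intro t ht ht'
  exact le_of_pow hl0.le hl fun n => ind n t ht ht'

lemma Dmod {x1 S c xs : ℝ} (h0 : 0 < x1) (h1 : x1 ≤ xs) (hxs : xs ≤ 1/2)
    (hS : 0 < S) (e1 : S * x1 + (c - S/2) = 0) (hfix : S * xs + (c - S/2) = xs)
    {ρ B : ℝ} (hρ0 : 0 ≤ ρ) (hρ : ρ ≤ 1) (hB0 : 0 ≤ B) (hB : B ≤ 1)
    {D D0 : ℝ → ℝ} {Γ l M u0 θ C1 : ℝ} (hl : l < 1) (hlS : S⁻¹ ≤ l)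
    (hD0 : ∀ t t', |D0 t - D0 t'| ≤ 2 * Γ * |t - t'|) (hDc : |D c| ≤ 8 * Γ)
    (hM : ∀ t, 0 ≤ t → t ≤ 1 → |D t| ≤ M) (hu0 : 0 < u0) (hu0' : u0 ≤ xs - x1)
    (hθ : S⁻¹ * S ^ (3/4 : ℝ) ≤ θ) (hC0 : 0 ≤ C1)
    (hC1 : 2 * M ≤ C1 * u0 ^ (3/4 : ℝ)) (hC2 : 10 * Γ ≤ C1 * (1 - θ))
    (E2 : ∀ t, x1 ≤ t → t ≤ 1/2 →
      D t = D0 t + ρ * (S⁻¹ * D (S * t + (c - S/2)) - t * B * D c)) :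
    ∀ u, 0 ≤ u → u ≤ xs → |D (xs - u) - D xs| ≤ C1 * u ^ (3/4 : ℝ) := by
  have hSi : 0 < S⁻¹ := by positivity
  have hl0 : 0 < l := hSi.trans_le hlS
  have hM0 : 0 ≤ M := (abs_nonneg _).trans (hM 0 le_rfl zero_le_one)
  have triv : ∀ u, 0 ≤ u → u ≤ xs → |D (xs - u) - D xs| ≤ 2 * M := by
    intro u hu hu'
    have a := hM (xs - u) (by linarith) (by linarith)
    have b := hM xs (by linarith) (by linarith)
    have := abs_sub (D (xs - u)) (D xs)
    linarith
  have hΓ0 : 0 ≤ Γ := by have := (abs_nonneg _).trans hDc; linarith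
  have ind : ∀ n : ℕ, ∀ u, 0 ≤ u → u ≤ xs →
      |D (xs - u) - D xs| ≤ C1 * u ^ (3/4 : ℝ) + 2 * M * l ^ n := by
    intro n
    induction n with
    | zero =>
      intro u hu hu'
      have := triv u hu hu'
      have : 0 ≤ C1 * u ^ (3/4 : ℝ) := by positivity
      simp; linarith
    | succ n ih =>
      intro u hu hu'
      rcases le_total u0 u with a | a
      · have b : u0 ^ (3/4 : ℝ) ≤ u ^ (3/4 : ℝ) := by gcongr
        have := triv u hu hu'
        have : C1 * u0 ^ (3/4 : ℝ) ≤ C1 * u ^ (3/4 : ℝ) := by gcongr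
        have : 0 ≤ 2 * M * l ^ (n+1) := by positivity
        linarith
      · have q1 := E2 (xs - u) (by linarith) (by linarith)
        have q2 := E2 xs h1 hxs
        rw [hfix] at q2
        rw [show S * (xs - u) + (c - S/2) = xs - S * u by linear_combination hfix] at q1
        have ihh := ih (S * u) (by positivity) (by nlinarith)
        set E := D (xs - S * u) - D xs with hE
        have q3 : D (xs - u) - D xs = (D0 (xs - u) - D0 xs) + ρ * (S⁻¹ * E + u * B * D c) := by
          rw [hE]; linear_combination q1 - q2
        have b1 := hD0 (xs - u) xs
        rw [show xs - u - xs = -u by ring, abs_neg, abs_of_nonneg hu] at b1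
        have b2 : |S⁻¹ * E| ≤ θ * C1 * u ^ (3/4 : ℝ) + 2 * M * l ^ (n+1) := by
          rw [abs_mul, abs_of_pos hSi]
          rw [Real.mul_rpow hS.le hu] at ihh
          calc S⁻¹ * |E| ≤ S⁻¹ * (C1 * (S ^ (3/4:ℝ) * u ^ (3/4:ℝ)) + 2 * M * l ^ n) := by gcongr
            _ = (S⁻¹ * S ^ (3/4 : ℝ)) * (C1 * u ^ (3/4:ℝ)) + S⁻¹ * (2 * M * l ^ n) := by ring
            _ ≤ θ * (C1 * u ^ (3/4:ℝ)) + l * (2 * M * l ^ n) := by gcongr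
            _ = _ := by ring
        have b3 : |u * B * D c| ≤ 8 * Γ * u := by
          rw [abs_mul, abs_mul, abs_of_nonneg hB0, abs_of_nonneg hu]
          calc u * B * |D c| ≤ u * 1 * (8 * Γ) := by gcongr
            _ = _ := by ring
        have b4 : |ρ * (S⁻¹ * E + u * B * D c)| ≤ |S⁻¹ * E| + |u * B * D c| := by
          rw [abs_mul, abs_of_nonneg hρ0]
          have := abs_add_le (S⁻¹ * E) (u * B * D c)
          have := abs_nonneg (S⁻¹ * E + u * B * D c)
          nlinarith
        have b5 : u ≤ u ^ (3/4 : ℝ) := by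
          have := Real.rpow_le_rpow_of_exponent_ge' hu (by linarith : u ≤ 1)
            (by norm_num : (0:ℝ) ≤ 3/4) (by norm_num : (3/4 : ℝ) ≤ 1)
          simpa using this
        have b6 := abs_add_le (D0 (xs - u) - D0 xs) (ρ * (S⁻¹ * E + u * B * D c))
        rw [q3]
        have b7 : 10 * Γ * u ≤ C1 * (1 - θ) * u ^ (3/4:ℝ) := by
          calc 10 * Γ * u ≤ 10 * Γ * u ^ (3/4:ℝ) := by gcongr
            _ ≤ _ := by gcongr
        linarith
  intro u hu hu'
  exact le_of_pow hl0.le hl fun n => ind n u hu hu'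


lemma exists_res {W g : ℝ → ℝ} (hW : Measurable W) (hg : Measurable g) {Γ ρ : ℝ}
    (hΓ : ∀ x, |g x| ≤ Γ) (h0 : 0 ≤ ρ) (h1 : ρ < 1) :
    ∃ G : ℝ → ℝ, Measurable G ∧ (∀ x, |G x| ≤ Γ / (1 - ρ)) ∧ ∀ x, G x = g x + ρ * G (W x) := by
  have hs : ∀ x, ∀ k, ‖ρ ^ k * g (W^[k] x)‖ ≤ Γ * ρ ^ k := by
    intro x k
    rw [norm_mul, norm_pow, Real.norm_of_nonneg h0, mul_comm]
    exact mul_le_mul_of_nonneg_right (hΓ _) (by positivity)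
  have hgeo : HasSum (fun k : ℕ => Γ * ρ ^ k) (Γ * (1 - ρ)⁻¹) :=
    (hasSum_geometric_of_lt_one h0 h1).mul_left Γ
  have hsum : ∀ x, Summable (fun k : ℕ => ρ ^ k * g (W^[k] x)) := fun x =>
    Summable.of_norm_bounded hgeo.summable (hs x)
  refine ⟨fun x => ∑' k : ℕ, ρ ^ k * g (W^[k] x), ?_, ?_, ?_⟩
  · refine measurable_of_tendsto_metrizable (f := fun n x =>
      ∑ k ∈ Finset.range n, ρ ^ k * g (W^[k] x)) ?_ ?_
    · intro n
      refine Finset.measurable_sum _ fun k _ => ?_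
      exact (hg.comp (hW.iterate k)).const_mul _
    · rw [tendsto_pi_nhds]
      intro x
      exact (hsum x).hasSum.tendsto_sum_nat
  · intro x
    rw [div_eq_mul_inv]
    exact tsum_of_norm_bounded hgeo (hs x)
  · intro x
    dsimp only
    rw [(hsum x).tsum_eq_zero_add, ← tsum_mul_left]
    simp only [pow_zero, Function.iterate_zero, id, one_mul, Function.iterate_succ_apply, pow_succ]
    congr 2; ext k; ring

set_option maxHeartbeats 1600000 in
lemma perA {x1 x2 S T c xs d : ℝ} (h0 : 0 < x1) (h1 : x1 < 1/2) (h2 : 1/2 < x2) (h3 : x2 < 1)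
    (hS : 1 < S) (hT : 1 < T) (e1 : S * x1 + (c - S/2) = 0) (e2 : (c + T/2) - T * x2 = 0)
    (hc : 1/2 ≤ c) (hc2 : c ≤ x2) (h1s : x1 ≤ xs) (hxs : xs ≤ 1/2)
    (hfix : S * xs + (c - S/2) = xs) (hd : (c + T/2) - T * c = xs - d) (hd0 : 0 ≤ d)
    (hd1 : d ≤ xs) (hB0 : 1/2 ≤ S⁻¹ + T⁻¹) (hB : S⁻¹ + T⁻¹ ≤ 1)
    {Γ l u0 θ C1 : ℝ} (hl : l < 1) (hlS : S⁻¹ ≤ l) (hlT : T⁻¹ ≤ l)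
    (hl1 : x1 ≤ l) (hl2 : 1 - x2 ≤ l)
    (hu0 : 0 < u0) (hu0' : u0 ≤ xs - x1)
    (hθ : S⁻¹ * S ^ (3/4 : ℝ) ≤ θ) (hC0 : 0 ≤ C1)
    (hC1 : 2 * (10 * Γ / (1 - l)) ≤ C1 * u0 ^ (3/4 : ℝ)) (hC2 : 10 * Γ ≤ C1 * (1 - θ))
    {g : ℝ → ℝ} (hg : Measurable g) (hΓ : ∀ x, |g x| ≤ Γ) 
    {ν : Measure ℝ} [IsProbabilityMeasure ν] (hac : ν ≪ volume)
    (hsupp : ν (Set.Icc (0:ℝ) 1)ᶜ = 0)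
    (hinv : ∀ A : Set ℝ, MeasurableSet A → ν (Wm x1 x2 S T c ⁻¹' A) = ν A)
    {D0 : ℝ → ℝ}
    (hD0 : ∀ t, D0 t = (∫ x in (0:ℝ)..t, g x) - t * ∫ x in (0:ℝ)..1, g x) :
    ∃ X Y : ℝ, ∫ x, g x ∂ν = (∫ x in (0:ℝ)..1, g x) + (S⁻¹ + T⁻¹) * Y ∧
      X * (1 - S⁻¹) = D0 xs - xs * (S⁻¹ + T⁻¹) * Y ∧
      |Y - D0 c - (-T⁻¹ * X + (1 - c) * (S⁻¹ + T⁻¹) * Y)| ≤ C1 * d ^ (3/4 : ℝ) := by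
  set B := S⁻¹ + T⁻¹ with hBdef
  have hS0 : 0 < S := by linarith
  have hT0 : 0 < T := by linarith
  have hTi : T⁻¹ ≤ 1 := inv_le_one_of_one_le₀ hT.le
  have hSi : S⁻¹ < 1 := inv_lt_one_of_one_lt₀ hS
  have hSi0 : 0 < S⁻¹ := by positivity
  have hTi0 : 0 < T⁻¹ := by positivity
  have hΓ0 : 0 ≤ Γ := (abs_nonneg _).trans (hΓ 0)
  have intb : ∀ (f : ℝ → ℝ) (K : ℝ), (∀ x, |f x| ≤ K) → ∀ t t' : ℝ,
      |∫ x in t..t', f x| ≤ K * |t' - t| := by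
    intro f K hK t t'
    rw [← Real.norm_eq_abs (∫ x in t..t', f x)]
    exact intervalIntegral.norm_integral_le_of_norm_le_const (fun x _ => hK x)
  have hI1 : |∫ x in (0:ℝ)..1, g x| ≤ Γ := by simpa using intb g Γ hΓ 0 1
  have hD0b : ∀ t, 0 ≤ t → t ≤ 1 → |D0 t| ≤ 2 * Γ := by
    intro t ht ht'
    rw [hD0]
    have a := intb g Γ hΓ 0 t
    rw [sub_zero, abs_of_nonneg ht] at a
    have b : |t * ∫ x in (0:ℝ)..1, g x| ≤ 1 * Γ := by
      rw [abs_mul, abs_of_nonneg ht]; gcongr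
    have := abs_sub (∫ x in (0:ℝ)..t, g x) (t * ∫ x in (0:ℝ)..1, g x)
    have := mul_le_mul_of_nonneg_left ht' hΓ0
    linarith
  have hD0L : ∀ t t', |D0 t - D0 t'| ≤ 2 * Γ * |t - t'| := by
    intro t t'
    have : D0 t - D0 t' = (∫ x in t'..t, g x) - (t - t') * ∫ x in (0:ℝ)..1, g x := by
      rw [hD0, hD0, ← intervalIntegral.integral_interval_sub_left (bdd_ii hg hΓ 0 t)
        (bdd_ii hg hΓ 0 t')]
      ring
    rw [this]
    have a := intb g Γ hΓ t' t
    have b : |(t - t') * ∫ x in (0:ℝ)..1, g x| ≤ |t - t'| * Γ := by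
      rw [abs_mul]; gcongr
    have := abs_sub (∫ x in t'..t, g x) ((t - t') * ∫ x in (0:ℝ)..1, g x)
    linarith
  -- the sequence of discount factors
  set ρ : ℕ → ℝ := fun n => 1 - 1 / ((n:ℝ) + 2) with hρ
  have hρ1 : ∀ n, ρ n < 1 := fun n => by
    have : 0 < 1 / ((n:ℝ) + 2) := by positivity
    simp only [hρ]; linarith
  have hρ2 : ∀ n, 1/2 ≤ ρ n := fun n => by
    have : 1 / ((n:ℝ) + 2) ≤ 1/2 := by
      apply one_div_le_one_div_of_le <;> [norm_num; skip]
      have : (0:ℝ) ≤ n := n.cast_nonneg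
      linarith
    simp only [hρ]; linarith
  have hρt : Tendsto ρ atTop (𝓝 1) := by
    have : Tendsto (fun n : ℕ => 1 / ((n:ℝ) + 2)) atTop (𝓝 0) := by
      refine Tendsto.div_atTop tendsto_const_nhds ?_
      exact tendsto_atTop_add_const_right _ _ tendsto_natCast_atTop_atTop
    have h := this.const_sub 1
    rw [sub_zero] at h
    exact h
  have hWm := Wm_meas x1 x2 S T c
  choose G hGm hGb hGe using fun n => exists_res hWm hg hΓ
    (show (0:ℝ) ≤ ρ n by linarith [hρ2 n]) (hρ1 n)
  set D : ℕ → ℝ → ℝ := fun n t => (∫ x in (0:ℝ)..t, G n x) - t * ∫ x in (0:ℝ)..1, G n x with hD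
  have eqs := fun n => Deqs h0 h1 h2 h3 hS0 hT0 e1 e2 (hGm n) hg (hGb n) hΓ (hGe n)
    (D := D n) (fun t => rfl) hD0
  have hΦ1 : ∀ n, |(1 - ρ n) * ∫ x in (0:ℝ)..1, G n x| ≤ Γ := by
    intro n
    have a := intb (G n) _ (hGb n) 0 1
    have : 0 < 1 - ρ n := by linarith [hρ1 n]
    rw [abs_mul, abs_of_pos this]
    rw [sub_zero, abs_one, mul_one, le_div_iff₀ this] at a
    linarith
  have hDc : ∀ n, |D n c| ≤ 8 * Γ := by
    intro n
    have a := (eqs n).1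
    have b : ρ n * B * D n c = (1 - ρ n) * (∫ x in (0:ℝ)..1, G n x) - ∫ x in (0:ℝ)..1, g x := by
      linarith
    have e : |ρ n * B * D n c| ≤ 2 * Γ := by
      rw [b]; refine (abs_sub _ _).trans ?_
      linarith [hΦ1 n]
    have f : 1/4 ≤ ρ n * B := by
      calc (1/4:ℝ) = 1/2*(1/2) := by norm_num
        _ ≤ ρ n * B := mul_le_mul (hρ2 n) hB0 (by norm_num) (by linarith [hρ2 n])
    rw [abs_mul, abs_of_pos (by linarith)] at e
    have := mul_le_mul_of_nonneg_right f (abs_nonneg (D n c))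
    linarith
  have hDM : ∀ n, ∀ t, 0 ≤ t → t ≤ 1 → |D n t| ≤ 10 * Γ / (1 - l) := by
    intro n
    obtain ⟨_, E1, E2, E3, E4⟩ := eqs n
    refine Dbound h0 h1 h2 h3 hS0 hT0 e1 e2 hc2 (by linarith [hρ2 n]) (hρ1 n).le
      (by linarith : 0 ≤ B) hB (K := 2 * (Γ / (1 - ρ n))) hl hlS hlT hl1 hl2 hD0b (hDc n) ?_ E1 E2 E3 E4
    intro t ht ht'
    have a := intb (G n) _ (hGb n) 0 t
    have b := intb (G n) _ (hGb n) 0 1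
    have : 0 < 1 - ρ n := by linarith [hρ1 n]
    have hh : 0 ≤ Γ / (1 - ρ n) := by positivity
    rw [sub_zero, abs_of_nonneg ht] at a
    rw [sub_zero, abs_one] at b
    have e : |t * ∫ x in (0:ℝ)..1, G n x| ≤ 1 * (Γ / (1 - ρ n) * 1) := by
      rw [abs_mul, abs_of_nonneg ht]; gcongr
    have := abs_sub (∫ x in (0:ℝ)..t, G n x) (t * ∫ x in (0:ℝ)..1, G n x)
    have := mul_le_mul_of_nonneg_left ht' hh
    simp only [hD]
    linarith
  have hmod : ∀ n, |D n (xs - d) - D n xs| ≤ C1 * d ^ (3/4 : ℝ) := by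
    intro n
    obtain ⟨_, E1, E2, E3, E4⟩ := eqs n
    exact Dmod h0 h1s hxs hS0 e1 hfix (by linarith [hρ2 n]) (hρ1 n).le
      (by linarith : 0 ≤ B) hB hl hlS hD0L (hDc n) (hDM n) hu0 hu0' hθ hC0 hC1 hC2 E2 d hd0 hd1
  have hmp : MeasurePreserving (Wm x1 x2 S T c) ν ν := by
    refine ⟨hWm, ?_⟩
    ext A hA
    rw [Measure.map_apply hWm hA, hinv A hA]
  have bI : ∀ (f : ℝ → ℝ) (K : ℝ), Measurable f → (∀ x, |f x| ≤ K) → Integrable f ν :=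
    fun f K hf hK => Integrable.of_bound hf.aestronglyMeasurable K (ae_of_all _ hK)
  have hLG : ∀ n, (1 - ρ n) * ∫ x, G n x ∂ν = ∫ x, g x ∂ν := by
    intro n
    have a : ∫ x, G n x ∂ν = ∫ x, (g x + ρ n * G n (Wm x1 x2 S T c x)) ∂ν :=
      integral_congr_ae (ae_of_all _ (hGe n))
    have i2 : Integrable (fun x => G n (Wm x1 x2 S T c x)) ν :=
      bI _ _ ((hGm n).comp hWm) (fun x => hGb n _)
    rw [integral_add (bI g Γ hg hΓ) (i2.const_mul _), integral_const_mul] at a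
    have b : ∫ x, G n (Wm x1 x2 S T c x) ∂ν = ∫ x, G n x ∂ν := by
      conv_rhs => rw [← hmp.map_eq]
      rw [integral_map hWm.aemeasurable (hGm n).aestronglyMeasurable]
    rw [b] at a
    linarith
  have hw : Tendsto (fun n => ∫ x, ((1 - ρ n) * (G n x - ∫ y in (0:ℝ)..1, G n y)) ∂ν) atTop
      (𝓝 0) := by
    refine weak_aux hac hsupp (C := 2 * Γ) (fun n => by have := hGm n; fun_prop) ?_ ?_
    · intro n x
      have a := hΦ1 n
      have : 0 < 1 - ρ n := by linarith [hρ1 n]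
      have b : |(1 - ρ n) * G n x| ≤ Γ := by
        have := hGb n x
        rw [le_div_iff₀ ‹_›] at this
        rw [abs_mul, abs_of_pos ‹_›]; linarith
      rw [mul_sub]
      refine (abs_sub _ _).trans ?_
      linarith
    · intro t ht ht'
      have e : ∀ n, ∫ x in (0:ℝ)..t, ((1 - ρ n) * (G n x - ∫ y in (0:ℝ)..1, G n y)) =
          (1 - ρ n) * D n t := by
        intro n
        rw [intervalIntegral.integral_const_mul, intervalIntegral.integral_sub
          (bdd_ii (hGm n) (hGb n) _ _) (by simp)]
        simp [hD]
      simp only [e]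
      have z : Tendsto (fun n => (1 - ρ n) * (10 * Γ / (1 - l))) atTop (𝓝 0) := by
        simpa using (hρt.const_sub 1).mul_const (10 * Γ / (1 - l))
      refine squeeze_zero_norm (fun n => ?_) z
      have : 0 < 1 - ρ n := by linarith [hρ1 n]
      rw [norm_mul, Real.norm_of_nonneg this.le]
      exact mul_le_mul_of_nonneg_left (hDM n t ht ht') this.le
  have hYt : Tendsto (fun n => D n c) atTop
      (𝓝 ((∫ x, g x ∂ν - ∫ x in (0:ℝ)..1, g x) / B)) := by
    have e : ∀ n, D n c = (∫ x, g x ∂ν - (∫ x in (0:ℝ)..1, g x) -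
        ∫ x, ((1 - ρ n) * (G n x - ∫ y in (0:ℝ)..1, G n y)) ∂ν) / (ρ n * B) := by
      intro n
      have p1 : 0 < ρ n := by linarith [hρ2 n]
      rw [integral_const_mul, integral_sub (bI _ _ (hGm n) (hGb n)) (by simp), mul_sub, hLG n]
      simp only [integral_const, probReal_univ, smul_eq_mul, one_mul]
      rw [(eqs n).1, eq_div_iff (mul_pos p1 (by linarith)).ne', hBdef]
      ring
    have hB1 : B ≠ 0 := by linarith
    have := (hw.const_sub (∫ x, g x ∂ν - (∫ x in (0:ℝ)..1, g x))).div (hρt.mul_const B)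
      (by simpa using hB1)
    simp only [sub_zero, one_mul] at this
    exact this.congr fun n => (e n).symm
  set Y := (∫ x, g x ∂ν - ∫ x in (0:ℝ)..1, g x) / B with hY
  have hden : ∀ n, 0 < 1 - ρ n * S⁻¹ := by
    intro n
    have := mul_le_mul_of_nonneg_right (hρ1 n).le hSi0.le
    linarith
  have hXe : ∀ n, D n xs = (D0 xs - ρ n * xs * B * D n c) / (1 - ρ n * S⁻¹) := by
    intro n
    obtain ⟨_, E1, E2, E3, E4⟩ := eqs n
    have := E2 xs h1s hxs
    rw [hfix] at this
    rw [eq_div_iff (hden n).ne']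
    linear_combination this
  have hXt : Tendsto (fun n => D n xs) atTop (𝓝 ((D0 xs - xs * B * Y) / (1 - S⁻¹))) := by
    simp only [hXe]
    have a := (((hρt.mul_const xs).mul_const B).mul hYt).const_sub (D0 xs)
    have b := (hρt.mul_const S⁻¹).const_sub 1
    simp only [one_mul] at a b
    exact a.div b (by linarith)
  refine ⟨(D0 xs - xs * B * Y) / (1 - S⁻¹), Y, ?_, ?_, ?_⟩
  · rw [hY]; field_simp [(by linarith : B ≠ 0)]; ring
  · rw [div_mul_cancel₀ _ (by linarith)]
  · have hlim : Tendsto (fun n => |D n c - D0 c -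
        ρ n * (-T⁻¹ * D n xs + (1 - c) * B * D n c)|) atTop (𝓝 |Y - D0 c -
        1 * (-T⁻¹ * ((D0 xs - xs * B * Y) / (1 - S⁻¹)) + (1 - c) * B * Y)|) :=
      ((hYt.sub_const _).sub (hρt.mul ((hXt.const_mul _).add (hYt.const_mul _)))).abs
    rw [one_mul] at hlim
    refine le_of_tendsto' hlim fun n => ?_
    obtain ⟨_, E1, E2, E3, E4⟩ := eqs n
    have := E3 c hc hc2
    rw [hd] at this
    have e : D n c - D0 c - ρ n * (-T⁻¹ * D n xs + (1 - c) * B * D n c) =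
        -(ρ n * T⁻¹) * (D n (xs - d) - D n xs) := by linear_combination this
    rw [e, abs_mul, abs_neg, abs_of_nonneg (mul_nonneg (by linarith [hρ2 n]) hTi0.le)]
    have p : ρ n * T⁻¹ ≤ 1 := by
      have := mul_le_mul_of_nonneg_right (hρ1 n).le hTi0.le
      linarith
    have := hmod n
    have := mul_le_mul_of_nonneg_right p (abs_nonneg (D n (xs - d) - D n xs))
    linarith

lemma Wmap_eq {s₁ s₂ p q r a : ℝ} (hS : 0 < s₁ + p*a) (hT : 0 < s₂ + q*a) :
    Wmap s₁ s₂ p q r a = Wm (1/2 - (1/2 + r*a)/(s₁ + p*a)) (1/2 + (1/2 + r*a)/(s₂ + q*a))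
      (s₁ + p*a) (s₂ + q*a) (1/2 + r*a) := by
  have hS' := hS.ne'
  have hT' := hT.ne'
  have aux : ∀ u v : ℝ, v ≠ 0 → 1/2 - u/v = (v - 2*u)/(2*v) := by
    intro u v hv
    field_simp
  have i1 : (1/2 - (1/2 + r*a)/(s₁ + p*a))⁻¹ = 2*(s₁ + p*a)/(s₁ - 1 + p*a - 2*r*a) := by
    rw [show (1/2 - (1/2 + r*a)/(s₁ + p*a)) = (s₁ - 1 + p*a - 2*r*a) / (2*(s₁ + p*a)) by
      rw [aux _ _ hS']; congr 1; ring, inv_div]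
  have i2 : (1 - (1/2 + (1/2 + r*a)/(s₂ + q*a)))⁻¹ = 2*(s₂ + q*a)/(s₂ - 1 + q*a - 2*r*a) := by
    rw [show (1 - (1/2 + (1/2 + r*a)/(s₂ + q*a))) = (s₂ - 1 + q*a - 2*r*a) / (2*(s₂ + q*a)) by
      rw [← sub_sub, show (1 - 1/2 : ℝ) = 1/2 by norm_num, aux _ _ hT']; congr 1; ring, inv_div]
  funext x
  unfold Wmap Wm
  rw [i1, i2]
  split_ifs <;> ring

set_option maxHeartbeats 1600000 in
lemma main_bdd (s₁ s₂ p q r : ℝ) (hs₁ : 1 < s₁) (hs₂ : 1 < s₂)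
    (hp : 0 < p) (hq : 0 < q) (hr : 0 < r)
    (hs : s₁ * s₂ = s₁ + s₂)
    (a₁ : ℝ) (ha₁ : 0 < a₁) (μ : ℝ → Measure ℝ)
    (hμ : ∀ a, 0 < a → a < a₁ →
      IsProbabilityMeasure (μ a) ∧
      μ a ≪ volume ∧
      μ a (Set.Icc (0:ℝ) 1)ᶜ = 0 ∧
      (∀ A : Set ℝ, MeasurableSet A → μ a (Wmap s₁ s₂ p q r a ⁻¹' A) = μ a A))
    {g : ℝ → ℝ} (hg : Continuous g) {Γ : ℝ} (hΓ : ∀ x, |g x| ≤ Γ) 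
    {K : ℝ} (hK : K = q*s₁+p*s₂-p-q)
    {I D0 : ℝ → ℝ} (hI : ∀ t, I t = ∫ x in (0:ℝ)..t, g x) (hD0 : ∀ t, D0 t = I t - t * I 1) :
    Tendsto (fun a => ∫ x, g x ∂(μ a)) (𝓝[>] (0:ℝ))
      (𝓝 (I 1 + ((g (1/2) - I 1) * (r + r / (s₁ - 1)) + K / (s₂ * (s₁ - 1)) * D0 (1/2)) /
        (K / (s₁ * s₂) + K / (s₂ * (s₁ - 1)) / 2 + r * (1 + 1 / (s₁ - 1))))) := by
  have hK0 : 0 < K := by rw [hK]; nlinarith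
  have hs1' : s₁ - 1 ≠ 0 := by linarith
  have hs1p : 0 < s₁ - 1 := by linarith
  have hΓ0 : 0 ≤ Γ := (abs_nonneg _).trans (hΓ 0)
  -- constants
  set l := max (max s₁⁻¹ s₂⁻¹) (1/2) with hl
  have hl1 : l < 1 := by
    rw [hl]; refine max_lt (max_lt ?_ ?_) (by norm_num)
    · exact inv_lt_one_of_one_lt₀ hs₁
    · exact inv_lt_one_of_one_lt₀ hs₂
  have hlb : 1/2 ≤ l := le_max_right _ _
  set θ := s₁ ^ (-(1/4) : ℝ) with hθ
  have hθ1 : θ < 1 := Real.rpow_lt_one_of_one_lt_of_neg hs₁ (by norm_num)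
  set u0 := 1 / (4 * s₁) with hu0
  have hu0p : 0 < u0 := by positivity
  set C1 := 2 * (10 * Γ / (1 - l)) / u0 ^ (3/4 : ℝ) + 10 * Γ / (1 - θ) with hC1
  have hl' : 0 < 1 - l := by linarith
  have hθ' : 0 < 1 - θ := by linarith
  have hu0q : 0 < u0 ^ (3/4 : ℝ) := by positivity
  have hC0 : 0 ≤ C1 := by positivity
  have hCa : 2 * (10 * Γ / (1 - l)) ≤ C1 * u0 ^ (3/4 : ℝ) := by
    rw [hC1, add_mul, div_mul_cancel₀ _ hu0q.ne']
    have : 0 ≤ 10 * Γ / (1 - θ) * u0 ^ (3/4 : ℝ) := by positivity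
    linarith
  have hCb : 10 * Γ ≤ C1 * (1 - θ) := by
    rw [hC1, add_mul, div_mul_cancel₀ _ hθ'.ne']
    have : 0 ≤ 2 * (10 * Γ / (1 - l)) / u0 ^ (3/4 : ℝ) * (1 - θ) := by positivity
    linarith
  -- functions of a
  set S : ℝ → ℝ := fun a => s₁ + p * a with hS
  set T : ℝ → ℝ := fun a => s₂ + q * a with hT
  set c : ℝ → ℝ := fun a => 1/2 + r * a with hc
  set xs : ℝ → ℝ := fun a => 1/2 - r * a / (S a - 1) with hxs
  set d : ℝ → ℝ := fun a => r * a ^ 2 * (K + p * q * a) / (S a - 1) with hd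
  set B : ℝ → ℝ := fun a => (S a)⁻¹ + (T a)⁻¹ with hB
  set k : ℝ → ℝ := fun a => (T a)⁻¹ / (1 - (S a)⁻¹) with hk
  have S0 : S 0 = s₁ := by simp [hS]
  have T0 : T 0 = s₂ := by simp [hT]
  have cS : ContinuousAt S 0 := by fun_prop
  have cT : ContinuousAt T 0 := by fun_prop
  have cc : ContinuousAt c 0 := by fun_prop
  have cxs : ContinuousAt xs 0 := by
    have : S 0 - 1 ≠ 0 := by rw [S0]; exact hs1'
    fun_prop (disch := assumption)
  have cd : ContinuousAt d 0 := by
    have : S 0 - 1 ≠ 0 := by rw [S0]; exact hs1'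
    fun_prop (disch := assumption)
  have cB : ContinuousAt B 0 := by
    have h1 : S 0 ≠ 0 := by rw [S0]; linarith
    have h2 : T 0 ≠ 0 := by rw [T0]; linarith
    fun_prop (disch := assumption)
  have ck : ContinuousAt k 0 := by
    have h1 : S 0 ≠ 0 := by rw [S0]; linarith
    have h2 : T 0 ≠ 0 := by rw [T0]; linarith
    have h3 : 1 - (S 0)⁻¹ ≠ 0 := by
      rw [S0]; have := inv_lt_one_of_one_lt₀ hs₁; linarith
    fun_prop (disch := assumption)
  have cx1 : ContinuousAt (fun a => 1/2 - c a / S a) 0 := by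
    have h1 : S 0 ≠ 0 := by rw [S0]; linarith
    fun_prop (disch := assumption)
  have cx2 : ContinuousAt (fun a => 1/2 + c a / T a) 0 := by
    have h1 : T 0 ≠ 0 := by rw [T0]; linarith
    fun_prop (disch := assumption)
  have B0 : B 0 = 1 := by
    simp only [hB, S0, T0]; field_simp; linarith
  have k0 : k 0 = 1 := by
    simp only [hk, S0, T0]
    have : 1 - s₁⁻¹ ≠ 0 := by have := inv_lt_one_of_one_lt₀ hs₁; linarith
    rw [div_eq_one_iff_eq this]; field_simp; linarith
  have c0 : c 0 = 1/2 := by simp [hc]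
  have xs0 : xs 0 = 1/2 := by simp [hxs]
  have d0 : d 0 = 0 := by simp [hd]
  have is1 : 0 < s₁⁻¹ ∧ s₁⁻¹ < 1 := ⟨by positivity, inv_lt_one_of_one_lt₀ hs₁⟩
  have is2 : 0 < s₂⁻¹ ∧ s₂⁻¹ < 1 := ⟨by positivity, inv_lt_one_of_one_lt₀ hs₂⟩
  have ev1 : ∀ᶠ a in 𝓝 (0:ℝ), 0 < 1/2 - c a / S a := by
    apply cx1.eventually_const_lt
    show 0 < 1/2 - c 0 / S 0
    rw [c0, S0]; have := div_eq_mul_inv (1/2) s₁; linarith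
  have ev2 : ∀ᶠ a in 𝓝 (0:ℝ), 1/2 + c a / T a < 1 := by
    apply cx2.eventually_lt_const
    show 1/2 + c 0 / T 0 < 1
    rw [c0, T0]; have := div_eq_mul_inv (1/2) s₂; linarith
  have ev3 : ∀ᶠ a in 𝓝 (0:ℝ), c a < 1/2 + c a / T a := by
    apply cc.eventually_lt cx2
    show c 0 < 1/2 + c 0 / T 0
    rw [c0, T0]; have := div_eq_mul_inv (1/2) s₂; linarith
  have ev4 : ∀ᶠ a in 𝓝 (0:ℝ), u0 < xs a - (1/2 - c a / S a) := by
    apply (cxs.sub cx1).eventually_const_lt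
    show u0 < xs 0 - (1/2 - c 0 / S 0)
    have e1 := div_eq_mul_inv (1/2) s₁
    have e2 : u0 = 1/4 * s₁⁻¹ := by rw [hu0, one_div, mul_inv]; norm_num
    rw [xs0, c0, S0, e2]; linarith
  have ev5 : ∀ᶠ a in 𝓝 (0:ℝ), d a < xs a := by
    apply cd.eventually_lt cxs
    rw [d0, xs0]; norm_num
  have ev6 : ∀ᶠ a in 𝓝 (0:ℝ), 1/2 < B a := by
    apply cB.eventually_const_lt
    rw [B0]; norm_num
  have evp : ∀ᶠ a in 𝓝[>] (0:ℝ), 0 < a := self_mem_nhdsWithin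
  have eva : ∀ᶠ a in 𝓝[>] (0:ℝ), a < a₁ :=
    nhdsWithin_le_nhds (eventually_lt_nhds ha₁)
  have oneB : ∀ a, 0 < a → 1 - B a = a * ((K + p * q * a) / (S a * T a)) := by
    intro a ha
    have h1 : 0 < S a := by positivity
    have h2 : 0 < T a := by positivity
    simp only [hB]; field_simp
    simp only [hS, hT, hK]; linear_combination hs
  have onek : ∀ a, 0 < a → 1 - k a = a * ((K + p * q * a) / (T a * (S a - 1))) := by
    intro a ha
    have h1 : 0 < S a := by positivity
    have h2 : 0 < T a := by positivity
    have h3 : 0 < S a - 1 := by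
      have : 0 < p * a := by positivity
      simp only [hS]; linarith
    have : k a = S a / (T a * (S a - 1)) := by
      simp only [hk]
      rw [show 1 - (S a)⁻¹ = (S a - 1) / S a by field_simp]
      field_simp
    rw [this]; field_simp
    simp only [hS, hT, hK]; linear_combination hs
  -- the key estimate
  have key : ∀ᶠ a in 𝓝[>] (0:ℝ), ∃ Y, ∫ x, g x ∂(μ a) = I 1 + B a * Y ∧
      |Y * (1 - (1 - c a) * B a - k a * xs a * B a) - (D0 (c a) - k a * D0 (xs a))| ≤
        C1 * d a ^ (3/4 : ℝ) := by
    filter_upwards [evp, eva, nhdsWithin_le_nhds ev1, nhdsWithin_le_nhds ev2,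
      nhdsWithin_le_nhds ev3, nhdsWithin_le_nhds ev4, nhdsWithin_le_nhds ev5,
      nhdsWithin_le_nhds ev6] with a ha ha' v1 v2 v3 v4 v5 v6
    obtain ⟨m1, m2, m3, m4⟩ := hμ a ha ha'
    have h1 : 0 < S a := by positivity
    have h2 : 0 < T a := by positivity
    have hpa : 0 < p * a := by positivity
    have hqa : 0 < q * a := by positivity
    have hra : 0 < r * a := by positivity
    have hSs : s₁ < S a := by simp only [hS]; linarith
    have hTs : s₂ < T a := by simp only [hT]; linarith
    have h3 : 0 < S a - 1 := by linarith
    have hca : 0 < c a := by positivity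
    rw [Wmap_eq h1 h2] at m4
    have hcS : 0 < c a / S a := by positivity
    have hcT : 0 < c a / T a := by positivity
    have hKp : 0 < K + p * q * a := by positivity
    obtain ⟨X, Y, r1, r2, r3⟩ := perA (S := S a) (T := T a) (c := c a) (xs := xs a) (d := d a)
      v1 (by linarith) (by linarith) v2 (by linarith) (by linarith)
      (by field_simp; ring) (by field_simp; ring) (by simp only [hc]; linarith) v3.le
      (by linarith) (by have : 0 < r * a / (S a - 1) := by positivity
                        simp only [hxs]; linarith)
      (by simp only [hxs, hc]; field_simp; ring)
      (by simp only [hxs, hc, hd]; field_simp; simp only [hS, hT, hK]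
          linear_combination (-2 * r * a) * hs)
      (by positivity) v5.le v6.le
      (by have := oneB a ha
          have : 0 < a * ((K + p * q * a) / (S a * T a)) := by positivity
          change B a ≤ 1
          linarith)
      hl1 ((inv_anti₀ (by linarith) hSs.le).trans ((le_max_left _ _).trans (le_max_left _ _)))
      ((inv_anti₀ (by linarith) hTs.le).trans ((le_max_right _ _).trans (le_max_left _ _)))
      (by linarith) (by linarith) hu0p v4.le
      (θ := θ) (by
        rw [← Real.rpow_neg_one, ← Real.rpow_add h1, hθ]
        norm_num
        exact Real.rpow_le_rpow_of_nonpos (by linarith) hSs.le (by norm_num))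
      hC0 hCa hCb hg.measurable hΓ m2 m3 m4 (D0 := D0) (fun t => by rw [hD0, hI, hI])
    refine ⟨Y, by rw [r1, hI], ?_⟩
    have hSi : 1 - (S a)⁻¹ ≠ 0 := by
      have := inv_lt_one_of_one_lt₀ (show 1 < S a by linarith)
      linarith
    have hX : (T a)⁻¹ * X = k a * (D0 (xs a) - xs a * B a * Y) := by
      simp only [hk, hB]
      rw [← r2]; field_simp
    refine le_of_eq_of_le ?_ r3
    congr 1
    simp only [hB] at hX ⊢
    linear_combination -hX
  -- asymptotics
  have dI : HasDerivAt D0 (g (1/2) - I 1) (1/2) := by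
    have : HasDerivAt I (g (1/2)) (1/2) := by
      rw [show I = fun t => ∫ x in (0:ℝ)..t, g x from funext hI]
      exact intervalIntegral.integral_hasDerivAt_right (hg.intervalIntegrable _ _)
        hg.aestronglyMeasurable.stronglyMeasurableAtFilter hg.continuousAt
    have h2 := this.sub ((hasDerivAt_id (1/2 : ℝ)).mul_const (I 1))
    rw [one_mul] at h2
    refine h2.congr_of_eventuallyEq (Eventually.of_forall fun t => ?_)
    simp [hD0]
  have d1 : Tendsto (fun a => (D0 (c a) - D0 (1/2)) / a) (𝓝[>] 0) (𝓝 ((g (1/2) - I 1) * r)) := by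
    have hc' : HasDerivAt c r 0 := by
      have := ((hasDerivAt_id (0:ℝ)).const_mul r).const_add (1/2)
      rw [mul_one] at this
      exact this
    have h := HasDerivAt.comp (h₂ := D0) (0:ℝ) (by rw [c0]; exact dI) hc'
    have := h.tendsto_slope_zero_right
    refine this.congr fun a => ?_
    simp [c0, div_eq_inv_mul]
  have d2 : Tendsto (fun a => (D0 (xs a) - D0 (1/2)) / a) (𝓝[>] 0)
      (𝓝 ((g (1/2) - I 1) * (-(r / (s₁ - 1))))) := by
    have hS' : HasDerivAt (fun a => S a - 1) p 0 := by
      have := (((hasDerivAt_id (0:ℝ)).const_mul p).const_add s₁).sub_const 1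
      rw [mul_one] at this
      exact this
    have hr' : HasDerivAt (fun a => r * a) r 0 := by
      simpa using ((hasDerivAt_id (0:ℝ)).const_mul r)
    have hx' : HasDerivAt xs (-(r / (s₁ - 1))) 0 := by
      have := (hr'.div hS' (by rw [S0]; exact hs1')).const_sub (1/2)
      refine this.congr_deriv ?_
      rw [S0]; field_simp; ring
    have h := HasDerivAt.comp (h₂ := D0) (0:ℝ) (by rw [xs0]; exact dI) hx'
    have := h.tendsto_slope_zero_right
    refine this.congr fun a => ?_
    simp [xs0, div_eq_inv_mul]
  have inv0 : ∀ {f : ℝ → ℝ}, ContinuousAt f 0 → Tendsto f (𝓝[>] 0) (𝓝 (f 0)) :=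
    fun h => h.tendsto.mono_left nhdsWithin_le_nhds
  have tk : Tendsto (fun a => (1 - k a) / a) (𝓝[>] 0) (𝓝 (K / (s₂ * (s₁ - 1)))) := by
    have : ContinuousAt (fun a => (K + p * q * a) / (T a * (S a - 1))) 0 := by
      have : T 0 * (S 0 - 1) ≠ 0 := by
        rw [S0, T0]; exact mul_ne_zero (by linarith) hs1'
      fun_prop (disch := assumption)
    have := inv0 this
    simp only [mul_zero, add_zero, S0, T0] at this
    refine this.congr' ?_
    filter_upwards [evp] with a ha
    rw [onek a ha]; field_simp
  have tB : Tendsto (fun a => (1 - B a) / a) (𝓝[>] 0) (𝓝 (K / (s₁ * s₂))) := by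
    have : ContinuousAt (fun a => (K + p * q * a) / (S a * T a)) 0 := by
      have : S 0 * T 0 ≠ 0 := by
        rw [S0, T0]; exact mul_ne_zero (by linarith) (by linarith)
      fun_prop (disch := assumption)
    have := inv0 this
    simp only [mul_zero, add_zero, S0, T0] at this
    refine this.congr' ?_
    filter_upwards [evp] with a ha
    rw [oneB a ha]; field_simp
  have cD0 : ContinuousAt D0 (1/2) := dI.continuousAt
  have tN : Tendsto (fun a => (D0 (c a) - k a * D0 (xs a)) / a) (𝓝[>] 0)
      (𝓝 ((g (1/2) - I 1) * (r + r / (s₁ - 1)) + K / (s₂ * (s₁ - 1)) * D0 (1/2))) := by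
    have tx : Tendsto (fun a => D0 (xs a)) (𝓝[>] 0) (𝓝 (D0 (1/2))) := by
      have : ContinuousAt (fun a => D0 (xs a)) 0 :=
        ContinuousAt.comp (g := D0) (by rw [xs0]; exact cD0) cxs
      simpa [xs0] using inv0 this
    have := (d1.sub d2).add (tk.mul tx)
    convert this using 2
    · ring
    · ring
  have tA : Tendsto (fun a => (1 - (1 - c a) * B a - k a * xs a * B a) / a) (𝓝[>] 0)
      (𝓝 (K / (s₁ * s₂) + K / (s₂ * (s₁ - 1)) / 2 + r * (1 + 1 / (s₁ - 1)))) := by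
    have h1 := inv0 cB
    have h2 := inv0 ck
    have h3 : Tendsto (fun a => (S a - 1)) (𝓝[>] 0) (𝓝 (s₁ - 1)) := by
      have := (inv0 cS).sub_const 1
      rwa [S0] at this
    rw [B0] at h1
    rw [k0] at h2
    have := (tB.add ((h1.mul tk).div_const 2)).add ((h1.mul_const r).mul ((h2.div h3 hs1').const_add 1))
    simp only [one_mul] at this
    refine this.congr' ?_
    filter_upwards [evp] with a ha
    simp only [hc, hxs, Pi.div_apply]
    field_simp
    ring
  have tE : Tendsto (fun a => C1 * d a ^ (3/4 : ℝ) / a) (𝓝[>] 0) (𝓝 0) := by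
    have h1 : ContinuousAt (fun a => (r * (K + p * q * a) / (S a - 1)) ^ (3/4:ℝ) *
        a ^ (1/2 : ℝ)) 0 := by
      apply ContinuousAt.mul
      · apply ContinuousAt.rpow_const
        · have : S 0 - 1 ≠ 0 := by rw [S0]; exact hs1'
          fun_prop (disch := assumption)
        · right; norm_num
      · exact Real.continuousAt_rpow_const _ _ (by right; norm_num)
    have h2 := (inv0 h1).const_mul C1
    rw [Real.zero_rpow (by norm_num), mul_zero, mul_zero] at h2
    refine h2.congr' ?_
    filter_upwards [evp] with a ha
    have hSa : 0 < S a - 1 := by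
      have : 0 < p * a := by positivity
      simp only [hS]; linarith
    have e : d a = (r * (K + p * q * a) / (S a - 1)) * a ^ 2 := by
      simp only [hd]; ring
    rw [e, Real.mul_rpow (by positivity) (by positivity)]
    have e2 : (a ^ 2) ^ (3/4 : ℝ) = a ^ (1/2 : ℝ) * a := by
      rw [← Real.rpow_natCast, ← Real.rpow_mul ha.le]
      nth_rewrite 3 [← Real.rpow_one a]
      rw [← Real.rpow_add ha]; norm_num
    rw [e2]; field_simp
  set A' := K / (s₁ * s₂) + K / (s₂ * (s₁ - 1)) / 2 + r * (1 + 1 / (s₁ - 1)) with hA'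
  have hA'0 : 0 < A' := by
    have : 0 < s₂ := by linarith
    have : 0 < s₁ := by linarith
    positivity
  set N' := (g (1/2) - I 1) * (r + r / (s₁ - 1)) + K / (s₂ * (s₁ - 1)) * D0 (1/2) with hN'
  have hYA : Tendsto (fun a => ((∫ x, g x ∂(μ a)) - I 1) / B a *
      ((1 - (1 - c a) * B a - k a * xs a * B a) / a)) (𝓝[>] 0) (𝓝 N') := by
    have : Tendsto (fun a => ((∫ x, g x ∂(μ a)) - I 1) / B a *
      ((1 - (1 - c a) * B a - k a * xs a * B a) / a) - (D0 (c a) - k a * D0 (xs a)) / a)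
      (𝓝[>] 0) (𝓝 0) := by
      refine squeeze_zero_norm' ?_ tE
      filter_upwards [evp, key, nhdsWithin_le_nhds ev6] with a ha hk6 v6
      obtain ⟨Y, y1, y2⟩ := hk6
      have hBa : B a ≠ 0 := by linarith
      rw [y1, add_sub_cancel_left, mul_div_cancel_left₀ _ hBa, ← mul_div_assoc, ← sub_div,
        norm_div, Real.norm_of_nonneg ha.le]
      exact div_le_div_of_nonneg_right y2 ha.le
    have := this.add tN
    rw [zero_add] at this
    exact this.congr fun a => by ring
  have tB1 : Tendsto B (𝓝[>] 0) (𝓝 1) := by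
    have := inv0 cB
    rwa [B0] at this
  have fin := ((hYA.div tA hA'0.ne').mul tB1).const_add (I 1)
  rw [mul_one] at fin
  refine fin.congr' ?_
  filter_upwards [tA.eventually_const_lt hA'0, nhdsWithin_le_nhds ev6] with a h1 h2
  have hBa : B a ≠ 0 := by linarith
  simp only [Pi.div_apply]
  rw [mul_div_assoc, div_self h1.ne', mul_one, div_mul_cancel₀ _ hBa]
  ring

/-- Theorem 1(II): if `1/s₁ + 1/s₂ = 1`, the acim's `μ_a` of `W_a` converge *-weakly, as
`a → 0⁺`, to the convex combination
`((qs₁+ps₂−p−q)(s₂+2)/D)·μ₀ + (2rs₁s₂²/D)·δ_{1/2}` where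
`D = (qs₁+ps₂−p−q)(s₂+2) + 2rs₁s₂²` and `μ₀` is the acim of `W₀` with density `h0`. -/
theorem Wmap_acim_tendsto_combination
    (s₁ s₂ p q r : ℝ) (hs₁ : 1 < s₁) (hs₂ : 1 < s₂)
    (hp : 0 < p) (hq : 0 < q) (hr : 0 < r)
    (hsum : 1/s₁ + 1/s₂ = 1)
    (a₁ : ℝ) (ha₁ : 0 < a₁) (μ : ℝ → Measure ℝ)
    (hμ : ∀ a, 0 < a → a < a₁ →
      Set.MapsTo (Wmap s₁ s₂ p q r a) (Set.Icc 0 1) (Set.Icc 0 1) ∧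
      IsProbabilityMeasure (μ a) ∧
      μ a ≪ volume ∧
      μ a (Set.Icc (0:ℝ) 1)ᶜ = 0 ∧
      (∀ A : Set ℝ, MeasurableSet A → μ a (Wmap s₁ s₂ p q r a ⁻¹' A) = μ a A)) :
    ∀ g : ℝ → ℝ, Continuous g →
      Tendsto (fun a => ∫ x, g x ∂(μ a)) (𝓝[>] (0:ℝ))
        (𝓝 ((q*s₁+p*s₂-p-q)*(s₂+2) / ((q*s₁+p*s₂-p-q)*(s₂+2) + 2*r*s₁*s₂^2) *
              (∫ x in Set.Icc (0:ℝ) 1, g x * h0 s₁ s₂ x) +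
            2*r*s₁*s₂^2 / ((q*s₁+p*s₂-p-q)*(s₂+2) + 2*r*s₁*s₂^2) * g (1/2))) := by
  intro g hgc
  have hs0 : 0 < s₁ := by linarith
  have hs0' : 0 < s₂ := by linarith
  have hs : s₁ * s₂ = s₁ + s₂ := by
    field_simp at hsum; linarith
  have hs1p : 0 < s₁ - 1 := by linarith
  -- clamped observable
  set g' : ℝ → ℝ := fun x => g (max 0 (min 1 x)) with hg'
  have hg'c : Continuous g' := by fun_prop
  have hgg : ∀ x ∈ Set.Icc (0:ℝ) 1, g' x = g x := by
    intro x hx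
    simp only [hg', min_eq_right hx.2, max_eq_right hx.1]
  obtain ⟨Γ, hΓ⟩ := (isCompact_Icc (a := (0:ℝ)) (b := 1)).exists_bound_of_continuousOn
    hgc.continuousOn
  have hΓ' : ∀ x, |g' x| ≤ Γ := by
    intro x
    exact hΓ _ ⟨le_max_left _ _, max_le (by norm_num) (min_le_left _ _)⟩
  set K := q*s₁+p*s₂-p-q with hK
  have hK0 : 0 < K := by rw [hK]; nlinarith
  have main := main_bdd s₁ s₂ p q r hs₁ hs₂ hp hq hr hs a₁ ha₁ μ
    (fun a h h' => (hμ a h h').2) hg'c hΓ' hK (I := fun t => ∫ x in (0:ℝ)..t, g' x)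
    (D0 := fun t => (∫ x in (0:ℝ)..t, g' x) - t * ∫ x in (0:ℝ)..1, g' x)
    (fun t => rfl) (fun t => rfl)
  have half : g' (1/2) = g (1/2) := hgg _ (by constructor <;> norm_num)
  rw [half] at main
  set I₁ := ∫ x in (0:ℝ)..(1/2), g' x with hI₁
  set I₂ := ∫ x in (1/2:ℝ)..1, g' x with hI₂
  have hI : ∫ x in (0:ℝ)..1, g' x = I₁ + I₂ :=
    (intervalIntegral.integral_add_adjacent_intervals (hg'c.intervalIntegrable _ _)
      (hg'c.intervalIntegrable _ _)).symm
  rw [hI] at main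
  have hint : ∫ x in Set.Icc (0:ℝ) 1, g x * h0 s₁ s₂ x =
      I₁ * (2*s₁*(s₂+1)/(2*s₁*s₂+s₁-s₂)) + I₂ * (2*s₂*(s₁-1)/(2*s₁*s₂+s₁-s₂)) := by
    rw [integral_Icc_eq_integral_Ioc, ← Set.Ioc_union_Ioc_eq_Ioc (b := (1/2:ℝ)) (by norm_num)
      (by norm_num)]
    have hbm : Measurable (h0 s₁ s₂) := by
      unfold h0
      exact Measurable.ite measurableSet_Iio measurable_const measurable_const
    have c1 : ∀ x ∈ Set.Ioo (0:ℝ) (1/2), g x * h0 s₁ s₂ x =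
        g' x * (2*s₁*(s₂+1)/(2*s₁*s₂+s₁-s₂)) := by
      intro x hx
      rw [hgg x ⟨hx.1.le, by linarith [hx.2]⟩, h0, if_pos hx.2]
    have c2 : ∀ x ∈ Set.Ioc (1/2:ℝ) 1, g x * h0 s₁ s₂ x =
        g' x * (2*s₂*(s₁-1)/(2*s₁*s₂+s₁-s₂)) := by
      intro x hx
      rw [hgg x ⟨by linarith [hx.1], hx.2⟩, h0, if_neg (by linarith [hx.1])]
    have i1 : IntegrableOn (fun x => g' x * (2*s₁*(s₂+1)/(2*s₁*s₂+s₁-s₂)))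
        (Set.Ioo (0:ℝ) (1/2)) :=
      ((hg'c.mul continuous_const).integrableOn_Icc (a := 0) (b := 1/2)).mono_set
        Set.Ioo_subset_Icc_self
    have i2 : IntegrableOn (fun x => g' x * (2*s₂*(s₁-1)/(2*s₁*s₂+s₁-s₂)))
        (Set.Ioc (1/2:ℝ) 1) :=
      ((hg'c.mul continuous_const).integrableOn_Icc (a := 1/2) (b := 1)).mono_set
        Set.Ioc_subset_Icc_self
    rw [setIntegral_union (by
        rw [Set.disjoint_left]; intro x hx hx'; exact absurd hx.2 (not_le.mpr hx'.1))
      measurableSet_Ioc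
      (by rw [integrableOn_Ioc_iff_integrableOn_Ioo]
          exact i1.congr_fun (fun x hx => (c1 x hx).symm) measurableSet_Ioo)
      (i2.congr_fun (fun x hx => (c2 x hx).symm) measurableSet_Ioc)]
    congr 1
    · rw [integral_Ioc_eq_integral_Ioo, setIntegral_congr_fun measurableSet_Ioo c1,
        integral_mul_const, hI₁, intervalIntegral.integral_of_le (by norm_num),
        integral_Ioc_eq_integral_Ioo]
    · rw [setIntegral_congr_fun measurableSet_Ioc c2,
        integral_mul_const, hI₂, intervalIntegral.integral_of_le (by norm_num)]
  rw [hint]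
  have hs2p : 0 < s₂ - 1 := by linarith
  have e1 : 2*s₁*(s₂+1)/(2*s₁*s₂+s₁-s₂) = 2*(s₂+1)/(s₂+2) := by
    have : 2*s₁*s₂+s₁-s₂ = s₁*(s₂+2) := by linear_combination hs
    rw [this]; field_simp
  have e2 : 2*s₂*(s₁-1)/(2*s₁*s₂+s₁-s₂) = 2/(s₂+2) := by
    have : 2*s₁*s₂+s₁-s₂ = s₁*(s₂+2) := by linear_combination hs
    rw [this, show 2*s₂*(s₁-1) = 2 * s₁ by linear_combination 2*hs]; field_simp
  rw [e1, e2]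
  have hden : 0 < K*(s₂+2) + 2*r*s₁*s₂^2 := by positivity
  have e3 : s₁ - 1 = s₁ / s₂ := by
    rw [eq_div_iff hs0'.ne']; linear_combination hs
  have hval : (I₁ + I₂) + ((g (1/2) - (I₁ + I₂)) * (r + r / (s₁ - 1)) +
      K / (s₂ * (s₁ - 1)) * (I₁ - 1/2 * (I₁ + I₂))) /
        (K / (s₁ * s₂) + K / (s₂ * (s₁ - 1)) / 2 + r * (1 + 1 / (s₁ - 1))) =
      K*(s₂+2) / (K*(s₂+2) + 2*r*s₁*s₂^2) * (I₁ * (2*(s₂+1)/(s₂+2)) + I₂ * (2/(s₂+2))) +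
            2*r*s₁*s₂^2 / (K*(s₂+2) + 2*r*s₁*s₂^2) * g (1/2) := by
    have d1 : K / (s₁ * s₂) + K / (s₂ * (s₁ - 1)) / 2 + r * (1 + 1 / (s₁ - 1)) =
        (K*(s₂+2) + 2*r*s₁*s₂^2) / (2*s₁*s₂) := by
      rw [e3]; field_simp
      linear_combination (-2*r*s₂) * hs
    have d2 : (g (1/2) - (I₁ + I₂)) * (r + r / (s₁ - 1)) +
      K / (s₂ * (s₁ - 1)) * (I₁ - 1/2 * (I₁ + I₂)) =
        ((g (1/2) - (I₁ + I₂)) * (2*r*s₁*s₂^2) + K * s₂ * (I₁ - I₂)) / (2*s₁*s₂) := by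
      rw [e3]; field_simp
      linear_combination (-2*r*(g (1/2) - (I₁ + I₂))) * hs
    rw [d1, d2, div_div_div_cancel_right₀ (by positivity)]
    field_simp
    ring
  rw [hval] at main
  refine main.congr' ?_
  have evp : ∀ᶠ a in 𝓝[>] (0:ℝ), 0 < a := self_mem_nhdsWithin
  have eva : ∀ᶠ a in 𝓝[>] (0:ℝ), a < a₁ :=
    nhdsWithin_le_nhds (eventually_lt_nhds ha₁)
  filter_upwards [evp, eva] with a ha ha'
  refine integral_congr_ae ?_
  have := (hμ a ha ha').2.2.2.1
  filter_upwards [mem_ae_iff.mpr this] with x hx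
  exact hgg x hx
end
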